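/- arXiv:1509.02013 — 9 statements merged into one kernel-verified Lean document; each statement's English description precedes it below -/
import Mathlib

section
/- Let q be an odd prime power and let f ∈ F_q[T] be monic. Then f is a sum of two squares if and only if for every monic irreducible polynomial P ∈ F_q[T] such that P(−T²) is irreducible in F_q[T], the multiplicity of P in the prime factorization of f is even. -/
section Helpers
open Polynomial

/-- Existence of the even/odd decomposition. -/
lemma exists_decomp {F : Type} [Field F] (g : F[X]) :
    ∃ a b : F[X], g = a.comp (-(X ^ 2)) + X * b.comp (-(X ^ 2)) := by
  induction g using Polynomial.induction_on' with
  | add p q hp hq =>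
    obtain ⟨a, b, h⟩ := hp
    obtain ⟨c, d, h'⟩ := hq
    refine ⟨a + c, b + d, ?_⟩
    rw [add_comp, add_comp, h, h']
    ring
  | monomial n r =>
    induction n with
    | zero => exact ⟨C r, 0, by simp⟩
    | succ n ih =>
      obtain ⟨a, b, h⟩ := ih
      refine ⟨-(X * b), a, ?_⟩
      have : monomial (n + 1) r = X * monomial n r := by
        rw [X_mul_monomial]
      rw [this, h]
      simp only [neg_comp, mul_comp, X_comp]
      ring

lemma natDegree_sig {F : Type} [Field F] (a : F[X]) :
    (a.comp (-(X ^ 2))).natDegree = a.natDegree * 2 := by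
  rw [natDegree_comp, natDegree_neg, natDegree_X_pow]

lemma sig_eq_zero {F : Type} [Field F] (a : F[X]) (h : a.comp (-(X ^ 2)) = 0) : a = 0 := by
  have h1 := natDegree_sig a
  rw [h, natDegree_zero] at h1
  rw [eq_C_of_natDegree_eq_zero (p := a) (by omega)] at h ⊢
  simpa using h

lemma decomp_zero {F : Type} [Field F] (a b : F[X])
    (h : a.comp (-(X ^ 2)) + X * b.comp (-(X ^ 2)) = 0) : a = 0 ∧ b = 0 := by
  by_cases hb : b = 0
  · subst hb
    exact ⟨sig_eq_zero a (by simpa using h), rfl⟩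
  · exfalso
    have h1 : a.comp (-(X ^ 2)) = -(X * b.comp (-(X ^ 2))) := eq_neg_of_add_eq_zero_left h
    have h2 := congrArg natDegree h1
    rw [natDegree_neg, natDegree_X_mul (fun h => hb (sig_eq_zero b h)), natDegree_sig,
      natDegree_sig] at h2
    omega

lemma decomp_unique {F : Type} [Field F] (a b c d : F[X])
    (h : a.comp (-(X ^ 2)) + X * b.comp (-(X ^ 2)) =
      c.comp (-(X ^ 2)) + X * d.comp (-(X ^ 2))) : a = c ∧ b = d := by
  have := decomp_zero (a - c) (b - d) (by
    simp only [sub_comp]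
    linear_combination h)
  exact ⟨sub_eq_zero.mp this.1, sub_eq_zero.mp this.2⟩

/-- An inert prime dividing a norm divides both coordinates. -/
lemma inert_dvd {F : Type} [Field F] (P A B : F[X])
    (hQ : Irreducible (P.comp (-(X ^ 2)))) (h : P ∣ A ^ 2 + X * B ^ 2) : P ∣ A ∧ P ∣ B := by
  have key : ∀ B : F[X], P.comp (-(X ^ 2)) ∣ A.comp (-(X ^ 2)) + X * B.comp (-(X ^ 2)) →
      P ∣ A ∧ P ∣ B := by
    rintro B ⟨h, hh⟩
    obtain ⟨c, d, rfl⟩ := exists_decomp h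
    have := decomp_unique A B (P * c) (P * d) (by
      rw [hh]; simp only [mul_comp]; ring)
    exact ⟨⟨c, this.1⟩, ⟨d, this.2⟩⟩
  obtain ⟨w, hw⟩ := h
  have h1 : P.comp (-(X ^ 2)) ∣ (A.comp (-(X ^ 2)) + X * B.comp (-(X ^ 2))) *
      (A.comp (-(X ^ 2)) + X * (-B).comp (-(X ^ 2))) := by
    refine ⟨w.comp (-(X ^ 2)), ?_⟩
    rw [← mul_comp, ← hw]
    simp only [add_comp, mul_comp, pow_comp, X_comp, neg_comp]
    ring
  rcases hQ.prime.dvd_or_dvd h1 with h2 | h2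
  · exact key B h2
  · have := key _ h2
    exact ⟨this.1, (dvd_neg).1 this.2⟩

lemma even_mult {F : Type} [Field F] (P : F[X]) (hP : P ≠ 0)
    (hQ : Irreducible (P.comp (-(X ^ 2)))) (k : ℕ) : ∀ A B : F[X],
    P ^ k ∣ A ^ 2 + X * B ^ 2 → ¬ P ^ (k + 1) ∣ A ^ 2 + X * B ^ 2 → Even k := by
  induction k using Nat.strong_induction_on with
  | _ k ih =>
    intro A B h1 h2
    rcases Nat.eq_zero_or_pos k with rfl | hk
    · exact Even.zero
    obtain ⟨⟨A', rfl⟩, ⟨B', rfl⟩⟩ := inert_dvd P A B hQ ((dvd_pow_self P hk.ne').trans h1)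
    have e : (P * A') ^ 2 + X * (P * B') ^ 2 = P ^ 2 * (A' ^ 2 + X * B' ^ 2) := by ring
    rw [e] at h1 h2
    obtain _ | _ | k := k
    · omega
    · exact absurd (Dvd.intro _ rfl) h2
    · have hP2 : P ^ 2 ≠ 0 := pow_ne_zero _ hP
      have e1 : P ^ (k + 1 + 1) = P ^ 2 * P ^ k := by ring
      have e2 : P ^ (k + 1 + 1 + 1) = P ^ 2 * P ^ (k + 1) := by ring
      rw [e1, mul_dvd_mul_iff_left hP2] at h1
      rw [e2, mul_dvd_mul_iff_left hP2] at h2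
      have := ih k (by omega) A' B' h1 h2
      exact this.add (by decide : Even 2)

/-- The leading coefficient of `a² + T b²` is a square. -/
lemma leadingCoeff_norm {F : Type} [Field F] (a b : F[X]) :
    ∃ c : F, (a ^ 2 + X * b ^ 2).leadingCoeff = c ^ 2 := by
  by_cases hb : b = 0
  · subst hb
    exact ⟨a.leadingCoeff, by simp⟩
  by_cases ha : a = 0
  · subst ha
    exact ⟨b.leadingCoeff, by simp⟩
  have e1 : (a ^ 2).degree = ((2 * a.natDegree : ℕ) : WithBot ℕ) := by
    rw [degree_eq_natDegree (pow_ne_zero _ ha), natDegree_pow]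
  have e2 : (X * b ^ 2).degree = ((2 * b.natDegree + 1 : ℕ) : WithBot ℕ) := by
    rw [degree_eq_natDegree (mul_ne_zero X_ne_zero (pow_ne_zero _ hb)),
      natDegree_X_mul (pow_ne_zero _ hb), natDegree_pow]
  rcases lt_or_ge b.natDegree a.natDegree with h | h
  · refine ⟨a.leadingCoeff, ?_⟩
    rw [leadingCoeff_add_of_degree_lt' (by rw [e1, e2]; exact_mod_cast (by omega)),
      leadingCoeff_pow]
  · refine ⟨b.leadingCoeff, ?_⟩
    rw [leadingCoeff_add_of_degree_lt (by rw [e1, e2]; exact_mod_cast (by omega))]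
    simp

lemma split_prime {F : Type} [Field F] (P : F[X]) (hm : P.Monic) (hP : Irreducible P)
    (hQ : ¬ Irreducible (P.comp (-(X ^ 2)))) : ∃ A B : F[X], P = A ^ 2 + X * B ^ 2 := by
  have hu : ¬ IsUnit (P.comp (-(X ^ 2))) := by
    intro h
    have h1 := natDegree_eq_zero_of_isUnit h
    rw [natDegree_sig] at h1
    have := hP.natDegree_pos
    omega
  rw [irreducible_iff] at hQ
  push Not at hQ
  obtain ⟨g, h, hgh, hg, hh⟩ := hQ hu
  obtain ⟨a, b, rfl⟩ := exists_decomp g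
  obtain ⟨c, d, rfl⟩ := exists_decomp h
  have hd := decomp_unique P 0 (a * c - X * b * d) (a * d + b * c) (by
    rw [hgh]
    simp only [add_comp, sub_comp, mul_comp, X_comp, zero_comp]
    ring)
  have hnm : P ^ 2 = (a ^ 2 + X * b ^ 2) * (c ^ 2 + X * d ^ 2) := by
    rw [hd.1]
    have := hd.2
    linear_combination (X * (a * d + b * c)) * this
  have hunit : ∀ a b : F[X], ¬ IsUnit (a.comp (-(X ^ 2)) + X * b.comp (-(X ^ 2))) →
      ¬ IsUnit (a ^ 2 + X * b ^ 2) := by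
    intro a b h1 h2
    apply h1
    have h3 := h2.map (compRingHom (-(X ^ 2) : F[X]))
    refine isUnit_of_dvd_unit ?_ h3
    refine ⟨a.comp (-(X ^ 2)) - X * b.comp (-(X ^ 2)), ?_⟩
    simp only [coe_compRingHom_apply, add_comp, mul_comp, pow_comp, X_comp]
    ring
  have hn := hunit a b hg
  have hm' := hunit c d hh
  obtain ⟨j, hj, hass⟩ := (dvd_prime_pow hP.prime 2).1 (Dvd.intro _ hnm.symm)
  have hj1 : j = 1 := by
    interval_cases j
    · exact absurd (associated_one_iff_isUnit.1 (by simpa using hass)) hn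
    · rfl
    · exfalso
      apply hm'
      obtain ⟨u, hu⟩ := hass
      rw [← hu] at hnm
      have hne : (a ^ 2 + X * b ^ 2) ≠ 0 := by
        intro h0
        rw [h0, zero_mul] at hu
        exact pow_ne_zero 2 hP.ne_zero hu.symm
      rw [← mul_left_cancel₀ hne hnm]
      exact u.isUnit
  subst hj1
  rw [pow_one] at hass
  obtain ⟨u, hu⟩ := hass.symm
  obtain ⟨r, hr, hru⟩ := isUnit_iff.1 u.isUnit
  rw [← hru] at hu
  obtain ⟨s, hs⟩ := leadingCoeff_norm a b
  rw [← hu, leadingCoeff_mul, hm.leadingCoeff, one_mul, leadingCoeff_C] at hs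
  have hs0 : s ≠ 0 := by
    rintro rfl
    apply hr.ne_zero
    simpa using hs
  refine ⟨C s⁻¹ * a, C s⁻¹ * b, ?_⟩
  have : C s⁻¹ * C s = (1 : F[X]) := by rw [← C_mul, inv_mul_cancel₀ hs0, C_1]
  rw [hs, C_pow] at hu
  linear_combination (C s⁻¹) ^ 2 * hu - P * (C s⁻¹ * C s + 1) * this

lemma two_sq_mul {F : Type} [Field F] {f g : F[X]} (hf : ∃ A B : F[X], f = A ^ 2 + X * B ^ 2)
    (hg : ∃ A B : F[X], g = A ^ 2 + X * B ^ 2) : ∃ A B : F[X], f * g = A ^ 2 + X * B ^ 2 := by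
  obtain ⟨A, B, rfl⟩ := hf
  obtain ⟨C, D, rfl⟩ := hg
  exact ⟨A * C - X * B * D, A * D + B * C, by ring⟩

lemma coprime_pow_dvd {F : Type} [Field F] {P R g : F[X]} (hP : P.Monic) (hP' : Irreducible P)
    (hR : R.Monic) (hR' : Irreducible R) (hne : R ≠ P) (n k : ℕ) (h : R ^ k ∣ P ^ n * g) :
    R ^ k ∣ g := by
  refine hR'.prime.pow_dvd_of_dvd_mul_left k (fun hd => hne ?_) h
  have := hR'.prime.dvd_of_dvd_pow hd
  exact eq_of_monic_of_associated hR hP (hR'.associated_of_dvd hP' this)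

lemma backward {F : Type} [Field F] (n : ℕ) : ∀ f : F[X], f.natDegree = n → f.Monic →
    (∀ P : F[X], P.Monic → Irreducible P → Irreducible (P.comp (-(X ^ 2))) →
        ∀ k : ℕ, P ^ k ∣ f → ¬ P ^ (k + 1) ∣ f → Even k) →
    ∃ A B : F[X], f = A ^ 2 + X * B ^ 2 := by
  induction n using Nat.strong_induction_on with
  | _ n ih =>
    intro f hn hf hc
    by_cases hu : IsUnit f
    · exact ⟨1, 0, by rw [hf.isUnit_iff.1 hu]; simp⟩
    obtain ⟨P, hPm, hP, hPf⟩ := exists_monic_irreducible_factor f hu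
    have hpos := hP.natDegree_pos
    by_cases hQ : Irreducible (P.comp (-(X ^ 2)))
    · have h2 : P ^ 2 ∣ f := by
        by_contra h
        have := hc P hPm hP hQ 1 (by simpa using hPf) h
        exact absurd this (by decide)
      obtain ⟨g, rfl⟩ := h2
      have hg : g.Monic := (hPm.pow 2).of_mul_monic_left hf
      refine two_sq_mul ⟨P, 0, by simp⟩ (ih g.natDegree ?_ g rfl hg ?_)
      · rw [(hPm.pow 2).natDegree_mul hg, hPm.natDegree_pow] at hn
        omega
      · intro R hR hR' hRQ k h1 h2
        by_cases hRP : R = P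
        · subst hRP
          have hne : R ^ 2 ≠ 0 := pow_ne_zero _ hP.ne_zero
          have := hc R hR hR' hRQ (k + 2)
            (by rw [add_comm, pow_add]; exact mul_dvd_mul_left _ h1)
            (by
              rw [show R ^ (k + 2 + 1) = R ^ 2 * R ^ (k + 1) by ring, mul_dvd_mul_iff_left hne]
              exact h2)
          exact (Nat.even_add.1 this).2 (by decide)
        · exact hc R hR hR' hRQ k (h1.mul_left _)
            (fun h => h2 (coprime_pow_dvd hPm hP hR hR' hRP 2 _ h))
    · obtain ⟨g, rfl⟩ := hPf
      have hg : g.Monic := hPm.of_mul_monic_left hf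
      refine two_sq_mul (split_prime P hPm hP hQ) (ih g.natDegree ?_ g rfl hg ?_)
      · rw [hPm.natDegree_mul hg] at hn
        omega
      · intro R hR hR' hRQ k h1 h2
        have hRP : R ≠ P := by
          rintro rfl
          exact hQ hRQ
        exact hc R hR hR' hRQ k (h1.mul_left _)
            (fun h => h2 (coprime_pow_dvd hPm hP hR hR' hRP 1 _ (by simpa using h)))

end Helpers

/-- **Fermat's theorem for `F_q[T]`.** A monic `f ∈ F_q[T]` (with `q` odd) is of the form
`A² + T·B²` if and only if every monic irreducible `P` with `P(-T²)` irreducible appears in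
the prime factorization of `f` with even multiplicity. -/
theorem sum_of_two_squares_iff_even_multiplicity
    (F : Type) [Field F] [Fintype F] (hodd : Odd (Fintype.card F))
    (f : Polynomial F) (hf : f.Monic) :
    (∃ A B : Polynomial F, f = A ^ 2 + Polynomial.X * B ^ 2) ↔
      ∀ P : Polynomial F, P.Monic → Irreducible P →
        Irreducible (P.comp (-(Polynomial.X ^ 2))) →
        ∀ k : ℕ, P ^ k ∣ f → ¬ P ^ (k + 1) ∣ f → Even k := by
  constructor
  · rintro ⟨A, B, rfl⟩ P _ hP hQ k h1 h2
    exact even_mult P hP.ne_zero hQ k A B h1 h2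
  · exact backward _ f rfl hf
end

section
/- For every integer n ≥ 1, the cardinality of X_n equals (2n)!/(2^n · n!); equivalently, #X_n / (2^n · n!) = binom(2n, n)/4^n. -/
/-- `X n` is the set of pairs `(ξ, π)` with `π` a permutation of `{1,…,n}` and
`ξ : {1,…,n} → {±1}` such that the product of `ξ` over every orbit of `π` equals `1`. -/
def XSet (n : ℕ) : Set ((Fin n → ℤˣ) × Equiv.Perm (Fin n)) :=
  {p | ∀ i : Fin n,
    (∏ j ∈ Finset.univ.filter (fun j => p.2.SameCycle i j), p.1 j) = 1}

/-- `ξ` is a multiplicative coboundary with respect to `π`. -/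
def Cob {n : ℕ} (p : (Fin n → ℤˣ) × Equiv.Perm (Fin n)) : Prop :=
  ∃ f : Fin n → ℤˣ, ∀ i, f (p.2 i) = p.1 i * f i

/-- Partial products of `ξ` along the forward orbit of `r`. -/
def pprod {n : ℕ} (ξ : Fin n → ℤˣ) (π : Equiv.Perm (Fin n)) (r : Fin n) (m : ℕ) : ℤˣ :=
  ∏ k ∈ Finset.range m, ξ (π^[k] r)

theorem pprod_period {n : ℕ} (ξ : Fin n → ℤˣ) (π : Equiv.Perm (Fin n)) (r : Fin n) :
    pprod ξ π r (Function.minimalPeriod π r) =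
      ∏ j ∈ Finset.univ.filter (fun j => π.SameCycle r j), ξ j := by
  have hp : 0 < Function.minimalPeriod π r := by
    apply Function.IsPeriodicPt.minimalPeriod_pos (n := orderOf π) (orderOf_pos π)
    show π^[orderOf π] r = r
    rw [Equiv.Perm.iterate_eq_pow, pow_orderOf_eq_one]; rfl
  have : Finset.univ.filter (fun j => π.SameCycle r j) =
      (Finset.range (Function.minimalPeriod π r)).image (fun k => π^[k] r) := by
    ext j
    simp only [Finset.mem_filter, Finset.mem_univ, true_and, Finset.mem_image, Finset.mem_range]
    constructor
    · intro h
      obtain ⟨m, -, hm⟩ := h.exists_pow_eq'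
      refine ⟨m % Function.minimalPeriod π r, Nat.mod_lt _ hp, ?_⟩
      rw [Function.iterate_mod_minimalPeriod_eq, Equiv.Perm.iterate_eq_pow, hm]
    · rintro ⟨k, -, hk⟩
      exact ⟨k, by rw [← hk, Equiv.Perm.iterate_eq_pow]; simp⟩
  rw [this, Finset.prod_image, pprod]
  intro a ha b hb hab
  simp only [Finset.coe_range, Set.mem_Iio] at ha hb
  exact (Function.iterate_eq_iterate_iff_of_lt_minimalPeriod ha hb).1 hab

theorem pprod_eq {n : ℕ} (ξ : Fin n → ℤˣ) (π : Equiv.Perm (Fin n)) (r : Fin n)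
    (h : pprod ξ π r (Function.minimalPeriod π r) = 1) (a b : ℕ) (hab : π^[a] r = π^[b] r) :
    pprod ξ π r a = pprod ξ π r b := by
  have hp : 0 < Function.minimalPeriod π r := by
    apply Function.IsPeriodicPt.minimalPeriod_pos (n := orderOf π) (orderOf_pos π)
    show π^[orderOf π] r = r
    rw [Equiv.Perm.iterate_eq_pow, pow_orderOf_eq_one]; rfl
  have hper : Function.Periodic (pprod ξ π r) (Function.minimalPeriod π r) := by
    intro m
    have : pprod ξ π r (Function.minimalPeriod π r + m) = pprod ξ π r m := by
      unfold pprod at h ⊢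
      rw [Finset.prod_range_add, h, one_mul]
      apply Finset.prod_congr rfl
      intro k _
      rw [add_comm, Function.iterate_add_apply, Function.iterate_minimalPeriod]
    rw [add_comm, this]
  rw [← hper.map_mod_nat a, ← hper.map_mod_nat b]
  congr 1
  apply (Function.iterate_eq_iterate_iff_of_lt_minimalPeriod (f := π) (x := r)
    (Nat.mod_lt _ hp) (Nat.mod_lt _ hp)).1
  rw [Function.iterate_mod_minimalPeriod_eq, Function.iterate_mod_minimalPeriod_eq, hab]

theorem mem_XSet_iff {n : ℕ} (p : (Fin n → ℤˣ) × Equiv.Perm (Fin n)) :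
    p ∈ XSet n ↔ Cob p := by
  obtain ⟨ξ, π⟩ := p
  constructor
  · intro h
    change ∀ i, _ = _ at h
    simp only at h
    let S : Setoid (Fin n) := Equiv.Perm.SameCycle.setoid π
    let r : Fin n → Fin n := fun i => (Quotient.mk S i).out
    have hr : ∀ i, π.SameCycle (r i) i := fun i => Quotient.exact (Quotient.out_eq (Quotient.mk S i))
    have hr2 : ∀ i, r (π i) = r i := by
      intro i
      have : Quotient.mk S (π i) = Quotient.mk S i := by
        apply Quotient.sound
        show π.SameCycle (π i) i
        exact Equiv.Perm.sameCycle_apply_left.2 (Equiv.Perm.SameCycle.refl _ _)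
      simp only [r, this]
    have hm : ∀ i, ∃ m : ℕ, π^[m] (r i) = i := by
      intro i
      obtain ⟨m, -, hm⟩ := (hr i).exists_pow_eq'
      exact ⟨m, by rw [Equiv.Perm.iterate_eq_pow, hm]⟩
    choose m hm using hm
    refine ⟨fun i => pprod ξ π (r i) (m i), fun i => ?_⟩
    have h1 : pprod ξ π (r i) (m (π i)) = pprod ξ π (r i) (m i + 1) := by
      apply pprod_eq
      · rw [pprod_period, h]
      · rw [Function.iterate_succ_apply', hm, ← hr2, hm]
    simp only [hr2, h1]
    rw [pprod, Finset.prod_range_succ, hm, mul_comm]; rfl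
  · rintro ⟨f, hf⟩ i
    simp only at hf ⊢
    have h1 : ∀ j, ξ j = f (π j) * (f j)⁻¹ := fun j => by rw [hf, mul_inv_cancel_right]
    simp only [h1, Finset.prod_mul_distrib, Finset.prod_inv_distrib]
    rw [mul_inv_eq_one]
    apply Finset.prod_equiv π
    · intro j; simp
    · intro j _; rfl

/-- Insertion of a new point `0` before `p`, with sign `s`. -/
def insEquiv (n : ℕ) : (ℤˣ × Fin (n + 1)) × ((Fin n → ℤˣ) × Equiv.Perm (Fin n)) ≃
    (Fin (n + 1) → ℤˣ) × Equiv.Perm (Fin (n + 1)) where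
  toFun x := (Fin.cons x.1.1 (fun i => x.2.1 i * if (x.2.2 i).succ = x.1.2 then x.1.1 else 1),
    Equiv.Perm.decomposeFin.symm (x.1.2, x.2.2))
  invFun y := ((y.1 0, (Equiv.Perm.decomposeFin y.2).1),
    (fun i => y.1 i.succ * if ((Equiv.Perm.decomposeFin y.2).2 i).succ =
      (Equiv.Perm.decomposeFin y.2).1 then y.1 0 else 1, (Equiv.Perm.decomposeFin y.2).2))
  left_inv := by
    rintro ⟨⟨s, p⟩, ξ, e⟩
    simp only [Equiv.apply_symm_apply, Fin.cons_zero, Fin.cons_succ, Prod.mk.injEq, true_and,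
      and_true]
    funext i
    split_ifs <;> simp [mul_assoc]
  right_inv := by
    rintro ⟨ξ, π⟩
    simp only [Prod.mk.eta, Equiv.symm_apply_apply, Prod.mk.injEq, and_true]
    funext i
    refine Fin.cases rfl (fun i => ?_) i
    simp only [Fin.cons_succ]
    split_ifs <;> simp [mul_assoc]

theorem cob_ins (n : ℕ) (x : (ℤˣ × Fin (n + 1)) × ((Fin n → ℤˣ) × Equiv.Perm (Fin n))) :
    Cob (insEquiv n x) ↔ (x.1.2 = 0 → x.1.1 = 1) ∧ Cob x.2 := by
  obtain ⟨⟨s, p⟩, ξ, e⟩ := x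
  simp only [Cob, insEquiv, Equiv.coe_fn_mk, Fin.forall_fin_succ, Fin.cons_zero, Fin.cons_succ,
    Equiv.Perm.decomposeFin_symm_apply_zero, Equiv.Perm.decomposeFin_symm_apply_succ]
  constructor
  · rintro ⟨f, h0, h⟩
    refine ⟨?_, fun i => f i.succ, fun i => ?_⟩
    · rintro rfl
      simpa using h0
    · have := h i
      by_cases hi : (e i).succ = p
      · subst hi
        simp only [Equiv.swap_apply_right, if_true] at this
        show f (e i).succ = ξ i * f i.succ
        rw [h0, this, mul_comm (ξ i) s, mul_assoc, ← mul_assoc s s, Int.units_mul_self, one_mul]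
      · rw [Equiv.swap_apply_of_ne_of_ne (Fin.succ_ne_zero _) hi] at this
        simpa [hi] using this
  · rintro ⟨hs, f, hf⟩
    refine Fin.cases (fun hs => ?_) (fun q _ => ?_) p hs
    · refine ⟨Fin.cons 1 f, by simp [hs rfl], fun i => ?_⟩
      simp [hf]
    · refine ⟨Fin.cons (s * f q) f, ?_, fun i => ?_⟩
      · simp [← mul_assoc]
      · by_cases hi : e i = q
        · subst hi
          simp [hf, mul_comm, mul_left_comm]
        · rw [Equiv.swap_apply_of_ne_of_ne (Fin.succ_ne_zero _) (by simpa using hi)]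
          simp [hf, hi]

theorem card_signs (n : ℕ) :
    Nat.card {x : ℤˣ × Fin (n + 1) // x.2 = 0 → x.1 = 1} = 2 * n + 1 := by
  have h := Fintype.card_subtype_compl (fun x : ℤˣ × Fin (n + 1) => x = (-1, 0))
  rw [Fintype.card_subtype_eq] at h
  simp only [Fintype.card_prod, Fintype.card_units_int, Fintype.card_fin] at h
  rw [← Nat.card_eq_fintype_card] at h
  rw [show 2 * n + 1 = 2 * (n + 1) - 1 by omega, ← h]
  apply Nat.card_congr
  apply Equiv.subtypeEquivRight
  rintro ⟨s, p⟩
  rcases Int.units_eq_one_or s with rfl | rfl <;> simp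

theorem card_succ (n : ℕ) : Nat.card (XSet (n + 1)) = (2 * n + 1) * Nat.card (XSet n) := by
  rw [← card_signs, ← Nat.card_prod]
  apply Nat.card_congr
  symm
  refine Equiv.trans ?_ (Equiv.subtypeEquiv (insEquiv n)
    (p := fun x => (x.1.2 = 0 → x.1.1 = 1) ∧ x.2 ∈ XSet n) ?_)
  · exact (Equiv.subtypeProdEquivProd (p := fun x : ℤˣ × Fin (n + 1) => x.2 = 0 → x.1 = 1)
      (q := fun x => x ∈ XSet n)).symm
  · intro x
    rw [mem_XSet_iff, mem_XSet_iff, cob_ins]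

theorem card_mul (n : ℕ) :
    Nat.card (XSet n) * (2 ^ n * Nat.factorial n) = Nat.factorial (2 * n) := by
  induction n with
  | zero =>
    have : XSet 0 = Set.univ := by
      ext p
      simp [XSet]
    simp [this]
  | succ n ih =>
    rw [card_succ, show 2 * (n + 1) = (2 * n + 1) + 1 by ring, Nat.factorial_succ (2 * n + 1),
      Nat.factorial_succ (2 * n), ← ih, Nat.factorial_succ]
    ring

/-- **Cardinality of `X_n`.** `#X_n = (2n)!/(2ⁿ·n!)`, equivalently
`#X_n/(2ⁿ·n!) = binom(2n,n)/4ⁿ`. -/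
theorem card_XSet (n : ℕ) (hn : 1 ≤ n) :
    Nat.card (XSet n) = Nat.factorial (2 * n) / (2 ^ n * Nat.factorial n) ∧
    (Nat.card (XSet n) : ℝ) / (2 ^ n * Nat.factorial n) =
      (Nat.choose (2 * n) n : ℝ) / 4 ^ n := by
  have h := card_mul n
  have hpos : 0 < 2 ^ n * Nat.factorial n := by positivity
  refine ⟨(Nat.div_eq_of_eq_mul_left hpos h.symm).symm, ?_⟩
  have hc : Nat.choose (2 * n) n * Nat.factorial n * Nat.factorial n = Nat.factorial (2 * n) := by
    have := Nat.choose_mul_factorial_mul_factorial (show n ≤ 2 * n by omega)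
    rwa [show 2 * n - n = n by omega] at this
  have hf : (Nat.factorial n : ℝ) ≠ 0 := by positivity
  have h' : (Nat.card (XSet n) : ℝ) * (2 ^ n * Nat.factorial n) =
      Nat.choose (2 * n) n * Nat.factorial n * Nat.factorial n := by
    exact_mod_cast h.trans hc.symm
  have h2 : (Nat.card (XSet n) : ℝ) * 2 ^ n = Nat.choose (2 * n) n * Nat.factorial n := by
    apply mul_right_cancel₀ hf
    rw [← h']; ring
  rw [div_eq_div_iff (by positivity) (by positivity),
    show (4 : ℝ) ^ n = 2 ^ n * 2 ^ n by rw [← mul_pow]; norm_num, ← mul_assoc, h2]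
  ring
end

section
/- Let K be a field of characteristic different from 2 and let f ∈ K[T] be a separable polynomial with f(0) ≠ 0. Then the polynomial f(−T²) ∈ K[T] is separable. -/
/-- If `char K ≠ 2` and `f ∈ K[T]` is separable with `f(0) ≠ 0`, then `f(-T²)` is
separable. -/
theorem separable_comp_neg_X_sq (K : Type) [Field K] (hchar : ringChar K ≠ 2)
    (f : Polynomial K) (hsep : f.Separable) (h0 : f.eval 0 ≠ 0) :
    (f.comp (-(Polynomial.X ^ 2))).Separable := by
  have h2 : (2 : K) ≠ 0 := Ring.two_ne_zero hchar
  have hX : IsCoprime (f.comp (-(Polynomial.X ^ 2))) (Polynomial.X : Polynomial K) := by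
    refine IsCoprime.symm ((Polynomial.irreducible_X.coprime_iff_not_dvd).2 ?_)
    rw [Polynomial.X_dvd_iff, Polynomial.coeff_zero_eq_eval_zero]
    simpa [Polynomial.eval_comp] using h0
  have hd : Polynomial.derivative (-(Polynomial.X ^ 2) : Polynomial K)
      = Polynomial.C (-2) * Polynomial.X := by
    simp
    rw [one_add_one_eq_two]
    rfl
  have hu : IsUnit (Polynomial.C (-2 : K)) :=
    Polynomial.isUnit_C.2 (isUnit_iff_ne_zero.2 (neg_ne_zero.2 h2))
  rw [Polynomial.separable_def, Polynomial.derivative_comp, hd]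
  refine IsCoprime.mul_right ((isCoprime_mul_unit_left_right hu _ _).2 hX) ?_
  exact IsCoprime.map hsep (Polynomial.compRingHom (-(Polynomial.X ^ 2)))
end

section
/- Let F be a finite field of odd cardinality, let P ∈ F[T] be a monic irreducible polynomial with P(0) ≠ 0, and let ω be a root of P in an algebraic closure of F. Then P(−T²) is reducible in F[T] if and only if −ω is a square in the field F(ω). -/
/-- Let `F` be a finite field of odd cardinality, `P ∈ F[T]` monic irreducible with
`P(0) ≠ 0`, and `ω` a root of `P` in an algebraic closure of `F`. Then `P(-T²)` is
reducible in `F[T]` if and only if `-ω` is a square in `F(ω)`. -/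
theorem comp_neg_X_sq_reducible_iff_neg_root_isSquare
    (F : Type) [Field F] [Fintype F] (hodd : Odd (Fintype.card F))
    (P : Polynomial F) (hP : P.Monic) (hirr : Irreducible P) (h0 : P.eval 0 ≠ 0)
    (ω : AlgebraicClosure F) (hω : Polynomial.aeval ω P = 0) :
    ¬ Irreducible (P.comp (-(Polynomial.X ^ 2))) ↔
      ∃ x ∈ IntermediateField.adjoin F {ω}, x ^ 2 = -ω := by
  have hint : ∀ z : AlgebraicClosure F, IsIntegral F z :=
    fun z => Algebra.IsIntegral.isIntegral z
  have hmin : P = minpoly F ω := minpoly.eq_of_irreducible_of_monic hirr hω hP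
  have hn : Module.finrank F (IntermediateField.adjoin F {ω}) = P.natDegree := by
    rw [IntermediateField.adjoin.finrank (hint ω), ← hmin]
  have hpos : 0 < P.natDegree := hirr.natDegree_pos
  have hdeg : (P.comp (-(Polynomial.X ^ 2))).natDegree = P.natDegree * 2 := by
    rw [Polynomial.natDegree_comp, Polynomial.natDegree_neg, Polynomial.natDegree_X_pow]
  have hQ0 : P.comp (-(Polynomial.X ^ 2)) ≠ 0 := by
    intro h
    rw [h, Polynomial.natDegree_zero] at hdeg
    omega
  have hroot : ∀ y : AlgebraicClosure F, y ^ 2 = -ω →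
      Polynomial.aeval y (P.comp (-(Polynomial.X ^ 2))) = 0 := by
    intro y hy
    rw [Polynomial.aeval_comp]
    simp [hy, hω]
  have hfin : ∀ z : AlgebraicClosure F,
      FiniteDimensional F (IntermediateField.adjoin F {z}) :=
    fun z => IntermediateField.adjoin.finiteDimensional (hint z)
  have hωy : ∀ y : AlgebraicClosure F, y ^ 2 = -ω →
      IntermediateField.adjoin F {ω} ≤ IntermediateField.adjoin F {y} := by
    intro y hy
    rw [IntermediateField.adjoin_simple_le_iff]
    have : ω = -(y ^ 2) := by rw [hy, neg_neg]
    rw [this]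
    exact neg_mem (pow_mem (IntermediateField.mem_adjoin_simple_self F y) 2)
  constructor
  · intro hred
    obtain ⟨y, hy⟩ := IsAlgClosed.exists_pow_nat_eq (-ω) (n := 2) (by norm_num)
    refine ⟨y, ?_, hy⟩
    have hdvd := minpoly.dvd F y (hroot y hy)
    have hle := Polynomial.natDegree_le_of_dvd hdvd hQ0
    have hlt : (minpoly F y).natDegree ≠ P.natDegree * 2 := by
      intro h
      apply hred
      have hass : Associated (minpoly F y) (P.comp (-(Polynomial.X ^ 2))) :=
        Polynomial.associated_of_dvd_of_natDegree_le hdvd hQ0 (by rw [h, hdeg])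
      exact hass.irreducible (minpoly.irreducible (hint y))
    have hfy := IntermediateField.adjoin.finrank (hint y)
    have hd := IntermediateField.finrank_dvd_of_le_right (hωy y hy)
    have hyp : 0 < (minpoly F y).natDegree := minpoly.natDegree_pos (hint y)
    rw [hn, hfy] at hd
    obtain ⟨k, hk⟩ := hd
    rw [hdeg] at hle
    have hk1 : k = 1 := by
      have h1 : k ≤ 2 := by
        rw [hk] at hle
        exact Nat.le_of_mul_le_mul_left hle hpos
      interval_cases k <;> omega
    have := hfin y
    have heq := IntermediateField.eq_of_le_of_finrank_eq (hωy y hy)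
      (by rw [hn, hfy, hk, hk1, mul_one])
    rw [heq]
    exact IntermediateField.mem_adjoin_simple_self F y
  · rintro ⟨x, hx, hxω⟩ hI
    have hass := (minpoly.irreducible (hint x)).associated_of_dvd hI
      (minpoly.dvd F x (hroot x hxω))
    have h1 := Polynomial.natDegree_eq_of_degree_eq (Polynomial.degree_eq_degree_of_associated hass)
    have heq : IntermediateField.adjoin F {ω} = IntermediateField.adjoin F {x} :=
      le_antisymm (hωy x hxω) (IntermediateField.adjoin_simple_le_iff.mpr hx)
    rw [heq, IntermediateField.adjoin.finrank (hint x)] at hn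
    omega
end

section
/- Let q be an odd prime power and let f ∈ F_q[T] be a monic separable polynomial with f(0) ≠ 0. Then f is a sum of two squares if and only if for every root ω of f in an algebraic closure of F_q, the element −ω is a square in the field F_q(ω). -/
open Polynomial in
theorem even_odd_decomp {F : Type} [Field F] (h : F[X]) :
    ∃ A B : F[X], h = A.comp (-X ^ 2) + X * B.comp (-X ^ 2) := by
  induction h using Polynomial.induction_on' with
  | add p q hp hq =>
    obtain ⟨A, B, rfl⟩ := hp
    obtain ⟨C, D, rfl⟩ := hq
    exact ⟨A + C, B + D, by simp only [add_comp]; ring⟩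
  | monomial n a =>
    rcases Nat.even_or_odd' n with ⟨k, rfl | rfl⟩
    · refine ⟨C a * (-X) ^ k, 0, ?_⟩
      rw [← C_mul_X_pow_eq_monomial]
      simp [pow_mul]
    · refine ⟨0, C a * (-X) ^ k, ?_⟩
      rw [← C_mul_X_pow_eq_monomial]
      simp [pow_mul, pow_succ]
      ring

open Polynomial in
theorem minpoly_sum {F : Type} [Field F] (ω x : AlgebraicClosure F)
    (hx : x ∈ IntermediateField.adjoin F {ω}) (hxω : x ^ 2 = -ω) :
    ∃ A B : F[X], minpoly F ω = A ^ 2 + X * B ^ 2 := by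
  have hω : IsIntegral F ω := Algebra.IsIntegral.isIntegral ω
  have hxi : IsIntegral F x := Algebra.IsIntegral.isIntegral x
  have hm := minpoly.monic hxi
  obtain ⟨A, B, hAB⟩ := even_odd_decomp (minpoly F x)
  refine ⟨A, B, ?_⟩
  have key : (A ^ 2 + X * B ^ 2).comp (-X ^ 2)
      = minpoly F x * (minpoly F x).comp (-X) := by
    have h2 : (minpoly F x).comp (-X) = A.comp (-X ^ 2) - X * B.comp (-X ^ 2) := by
      rw [hAB]
      simp [comp_assoc]
      ring
    rw [h2]
    nth_rw 1 [hAB]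
    simp
    ring
  have hd2 : (-X ^ 2 : F[X]).natDegree = 2 := by simp
  have hdeg : (A ^ 2 + X * B ^ 2).natDegree = (minpoly F x).natDegree := by
    have := congrArg natDegree key
    rw [natDegree_comp, hd2, hm.natDegree_mul', natDegree_comp] at this
    · simp at this
      omega
    · intro h0
      have := congrArg leadingCoeff h0
      rw [leadingCoeff_comp (by simp)] at this
      simp [hm.leadingCoeff] at this
  have hmon : (A ^ 2 + X * B ^ 2).Monic := by
    have := congrArg leadingCoeff key
    rw [leadingCoeff_comp (by simp), leadingCoeff_mul, leadingCoeff_comp (by simp), hdeg] at this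
    simp [hm.leadingCoeff] at this
    exact this
  have hroot : aeval ω (A ^ 2 + X * B ^ 2) = 0 := by
    have := congrArg (aeval x) key
    rw [map_mul, minpoly.aeval, zero_mul, aeval_comp] at this
    simpa [hxω] using this
  have hle : (minpoly F x).natDegree ≤ (minpoly F ω).natDegree := by
    haveI := IntermediateField.adjoin.finiteDimensional hω
    have h1 := minpoly.natDegree_le (A := F) (⟨x, hx⟩ : IntermediateField.adjoin F {ω})
    rw [IntermediateField.adjoin.finrank hω] at h1
    rwa [← minpoly.algebraMap_eq (B' := AlgebraicClosure F)
      (FaithfulSMul.algebraMap_injective (IntermediateField.adjoin F {ω}) _)] at h1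
  exact (eq_of_monic_of_dvd_of_natDegree_le (minpoly.monic hω) hmon
    (minpoly.dvd F ω hroot) (hdeg ▸ hle)).symm

open Polynomial in
theorem sum_of_roots {F : Type} [Field F] (n : ℕ) : ∀ f : F[X], f.natDegree = n → f.Monic →
    (∀ ω : AlgebraicClosure F, aeval ω f = 0 →
        ∃ x ∈ IntermediateField.adjoin F {ω}, x ^ 2 = -ω) →
    ∃ A B : F[X], f = A ^ 2 + X * B ^ 2 := by
  induction n using Nat.strong_induction_on with
  | _ n ih =>
    intro f hn hf H
    by_cases h0 : f.natDegree = 0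
    · exact ⟨1, 0, by simp [hf.natDegree_eq_zero.mp h0]⟩
    · obtain ⟨ω, hω⟩ := IsAlgClosed.exists_aeval_eq_zero (AlgebraicClosure F) f
        (fun h => h0 (natDegree_eq_of_degree_eq_some h))
      obtain ⟨x, hx, hxω⟩ := H ω hω
      obtain ⟨A, B, hAB⟩ := minpoly_sum ω x hx hxω
      have hi : IsIntegral F ω := Algebra.IsIntegral.isIntegral ω
      obtain ⟨g, hg⟩ := minpoly.dvd F ω hω
      have hgm : g.Monic := (minpoly.monic hi).of_mul_monic_left (hg ▸ hf)
      have hd : f.natDegree = (minpoly F ω).natDegree + g.natDegree := by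
        rw [hg, (minpoly.monic hi).natDegree_mul hgm]
      have hp := minpoly.natDegree_pos hi
      obtain ⟨C, D, hCD⟩ := ih g.natDegree (by omega) g rfl hgm (fun τ hτ => H τ (by
        rw [hg, map_mul, hτ, mul_zero]))
      exact ⟨A * C - X * B * D, A * D + B * C, by rw [hg, hAB, hCD]; ring⟩

/-- Let `q` be odd and `f ∈ F_q[T]` monic, separable, with `f(0) ≠ 0`. Then `f` is a sum
of two squares (`f = A² + T·B²`) if and only if for every root `ω` of `f` in an algebraic
closure, `-ω` is a square in `F_q(ω)`. -/
theorem sum_of_two_squares_iff_neg_roots_squares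
    (F : Type) [Field F] [Fintype F] (hodd : Odd (Fintype.card F))
    (f : Polynomial F) (hf : f.Monic) (hsep : f.Separable) (h0 : f.eval 0 ≠ 0) :
    (∃ A B : Polynomial F, f = A ^ 2 + Polynomial.X * B ^ 2) ↔
      ∀ ω : AlgebraicClosure F, Polynomial.aeval ω f = 0 →
        ∃ x ∈ IntermediateField.adjoin F {ω}, x ^ 2 = -ω := by
  constructor
  · rintro ⟨A, B, hAB⟩ ω hω
    have hmem : ∀ p : Polynomial F, Polynomial.aeval ω p ∈ IntermediateField.adjoin F {ω} :=
      fun p => IntermediateField.algebra_adjoin_le_adjoin F {ω}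
        (Polynomial.aeval_mem_adjoin_singleton F ω)
    have hd := hsep.aeval_derivative_ne_zero hω
    have he : Polynomial.aeval ω A ^ 2 + ω * Polynomial.aeval ω B ^ 2 = 0 := by
      simpa [hAB] using hω
    have hB : Polynomial.aeval ω B ≠ 0 := by
      intro hB
      have hA : Polynomial.aeval ω A = 0 := by simpa [hB] using he
      apply hd
      simp [hAB, hA, hB, pow_two]
    refine ⟨Polynomial.aeval ω A / Polynomial.aeval ω B, div_mem (hmem A) (hmem B), ?_⟩
    rw [div_pow, div_eq_iff (pow_ne_zero 2 hB)]
    linear_combination he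
  · exact sum_of_roots _ f rfl hf
end

section
/- Let K be a field of characteristic different from 2, let f ∈ K[T] be a monic separable polynomial of degree n with f(0) ≠ 0, let L be a splitting field of f over K with roots α₁, …, α_n, and set yᵢ = −αᵢ, so that f(T) = ∏_{i=1}^n (T + yᵢ). Let G = Gal(L|K), acting on {1, …, n} through its permutation action on the roots. Assume that the only G-invariant subspaces of F₂ⁿ (for the action of G permuting coordinates via its action on the roots) are the zero subspace, the span of (1, …, 1), the subspace of vectors with coordinate sum 0, and F₂ⁿ itself. If f(0) and y₁ are square-independent in L, then the Galois group of f(−T²) over K has order 2ⁿ · |G|. -/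
open Polynomial in
theorem aux_sep {K : Type} [Field K] (h2 : (2 : K) ≠ 0) (f : K[X]) (hsep : f.Separable)
    (h0 : f.eval 0 ≠ 0) : (f.comp (-(X ^ 2))).Separable := by
  unfold Polynomial.Separable
  have hd : derivative (f.comp (-(X ^ 2))) = (C (-2 : K) * X) * (derivative f).comp (-(X ^ 2)) := by
    rw [derivative_comp]
    simp only [derivative_neg, derivative_X_pow]
    simp
  rw [hd]
  apply IsCoprime.mul_right
  · apply IsCoprime.mul_right
    · apply IsCoprime.symm
      apply IsCoprime.of_isCoprime_of_dvd_left isCoprime_one_left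
      have : IsUnit (C (-2 : K)) := isUnit_C.mpr (isUnit_iff_ne_zero.mpr (neg_ne_zero.mpr h2))
      exact this.dvd
    · apply IsCoprime.symm
      rcases EuclideanDomain.dvd_or_coprime (X : K[X]) (f.comp (-(X ^ 2))) irreducible_X with h | h
      rotate_left
      · exact h
      · exfalso
        rw [X_dvd_iff, coeff_zero_eq_eval_zero] at h
        simp at h
        exact h0 h
  · have := IsCoprime.map (show IsCoprime f (derivative f) from hsep) (compRingHom (-(X ^ 2) : K[X]))
    simpa using this

/-- sign character -/
def chiS (M : Type) [Field M] (a : ZMod 2) : M := (-1) ^ a.val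

theorem chiS_zero (M : Type) [Field M] : chiS M 0 = 1 := by simp [chiS]

theorem chiS_one (M : Type) [Field M] : chiS M 1 = -1 := by
  have : (1 : ZMod 2).val = 1 := rfl
  simp [chiS, this]

theorem zmod2_cases (a : ZMod 2) : a = 0 ∨ a = 1 := by
  revert a; decide

theorem zmod2_11 : (1 : ZMod 2) + 1 = 0 := by decide

theorem chiS_add (M : Type) [Field M] (a b : ZMod 2) : chiS M (a + b) = chiS M a * chiS M b := by
  rcases zmod2_cases a with rfl | rfl <;> rcases zmod2_cases b with rfl | rfl <;>
    simp [chiS_zero, chiS_one, zmod2_11]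

theorem chiS_pow (M : Type) [Field M] (a b : ZMod 2) : chiS M a ^ b.val = chiS M (a * b) := by
  have : (1 : ZMod 2).val = 1 := rfl
  rcases zmod2_cases a with rfl | rfl <;> rcases zmod2_cases b with rfl | rfl <;>
    simp [chiS_zero, chiS_one, this]

theorem chiS_sum (M : Type) [Field M] {ι : Type} (s : Finset ι) (c : ι → ZMod 2) :
    ∏ i ∈ s, chiS M (c i) = chiS M (∑ i ∈ s, c i) := by
  classical
  induction s using Finset.induction_on with
  | empty => simp [chiS_zero]
  | insert a s ha ih => rw [Finset.prod_insert ha, Finset.sum_insert ha, ih, chiS_add]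

theorem chiS_inj (M : Type) [Field M] (h2 : (2 : M) ≠ 0) {s : M} (hs : s ≠ 0) {a b : ZMod 2}
    (h : chiS M a * s = chiS M b * s) : a = b := by
  have h := mul_right_cancel₀ hs h
  have h3 : (1 : M) ≠ -1 := by
    intro h; apply h2; linear_combination h
  rcases zmod2_cases a with rfl | rfl <;> rcases zmod2_cases b with rfl | rfl <;>
    simp_all [chiS_zero, chiS_one]

theorem pow_add_val {L : Type} [Field L] (y : L) (hy : y ≠ 0) (a b : ZMod 2) :
    ∃ t : L, y ^ (a + b).val = y ^ a.val * y ^ b.val * t ^ 2 := by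
  have h1 : (1 : ZMod 2).val = 1 := rfl
  rcases zmod2_cases a with rfl | rfl <;> rcases zmod2_cases b with rfl | rfl
  · exact ⟨1, by simp⟩
  · exact ⟨1, by simp⟩
  · exact ⟨1, by simp⟩
  · refine ⟨y⁻¹, ?_⟩
    rw [zmod2_11, h1]; field_simp; simp

/-- exponent vectors of square products -/
def sqV {L : Type} [Field L] {n : ℕ} (y : Fin n → L) (hy : ∀ i, y i ≠ 0) :
    Submodule (ZMod 2) (Fin n → ZMod 2) where
  carrier := {v | ∃ z : L, ∏ i, y i ^ (v i).val = z ^ 2}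
  zero_mem' := ⟨1, by simp⟩
  add_mem' := by
    rintro a b ⟨z, hz⟩ ⟨w, hw⟩
    choose t ht using fun i => pow_add_val (y i) (hy i) (a i) (b i)
    refine ⟨z * w * ∏ i, t i, ?_⟩
    simp only [Pi.add_apply, ht, Finset.prod_mul_distrib, hz, hw, Finset.prod_pow]
    ring
  smul_mem' := by
    rintro c v ⟨z, hz⟩
    rcases zmod2_cases c with rfl | rfl
    · exact ⟨1, by simp⟩
    · exact ⟨z, by simpa using hz⟩

theorem mem_sqV {L : Type} [Field L] {n : ℕ} (y : Fin n → L) (hy : ∀ i, y i ≠ 0)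
    (v : Fin n → ZMod 2) : v ∈ sqV y hy ↔ ∃ z : L, ∏ i, y i ^ (v i).val = z ^ 2 := Iff.rfl

theorem kummer_card {L M : Type} [Field L] [Field M] [Algebra L M] [FiniteDimensional L M]
    [IsGalois L M]
    (h2 : (2 : M) ≠ 0) {n : ℕ} (y : Fin n → L) (hy : ∀ i, y i ≠ 0) (hV : sqV y hy = ⊥)
    (s : Fin n → M) (hs : ∀ i, s i ^ 2 = algebraMap L M (y i))
    (hgen : ∀ σ τ : M ≃ₐ[L] M, (∀ i, σ (s i) = τ (s i)) → σ = τ) :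
    Nat.card (M ≃ₐ[L] M) = 2 ^ n := by
  classical
  have hs0 : ∀ i, s i ≠ 0 := by
    intro i h
    have := hs i
    rw [h] at this
    apply hy i
    apply (algebraMap L M).injective
    rw [← this]; simp
  have hex : ∀ σ : M ≃ₐ[L] M, ∃ c : Fin n → ZMod 2, ∀ i, σ (s i) = chiS M (c i) * s i := by
    intro σ
    have : ∀ i, ∃ c : ZMod 2, σ (s i) = chiS M c * s i := by
      intro i
      have h : σ (s i) ^ 2 = s i ^ 2 := by rw [← map_pow, hs]; simp
      rcases sq_eq_sq_iff_eq_or_eq_neg.mp h with h | h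
      · exact ⟨0, by simp [chiS_zero, h]⟩
      · exact ⟨1, by simp [chiS_one, h]⟩
    choose c hc using this
    exact ⟨c, hc⟩
  have hσχ : ∀ (σ : M ≃ₐ[L] M) (a : ZMod 2), σ (chiS M a) = chiS M a := by
    intro σ a; simp [chiS]
  let H : Submodule (ZMod 2) (Fin n → ZMod 2) :=
    { carrier := {c | ∃ σ : M ≃ₐ[L] M, ∀ i, σ (s i) = chiS M (c i) * s i}
      zero_mem' := ⟨1, by simp [chiS_zero]⟩
      add_mem' := by
        rintro a b ⟨σ, hσ⟩ ⟨τ, hτ⟩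
        refine ⟨σ * τ, fun i => ?_⟩
        rw [AlgEquiv.mul_apply, hτ, map_mul, hσχ, hσ, Pi.add_apply, chiS_add]; ring
      smul_mem' := by
        rintro c v ⟨σ, hσ⟩
        rcases zmod2_cases c with rfl | rfl
        · exact ⟨1, by simp [chiS_zero]⟩
        · exact ⟨σ, by simpa using hσ⟩ }
  have hH : H = ⊤ := by
    by_contra hne
    obtain ⟨φ, hφ0, hφ⟩ := Submodule.exists_le_ker_of_lt_top H (lt_top_iff_ne_top.mpr hne)
    let v : Fin n → ZMod 2 := fun i => φ (Pi.single i 1)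
    have hφv : ∀ c, φ c = ∑ i, c i * v i := by
      intro c
      conv_lhs => rw [pi_eq_sum_univ' c, map_sum]
      refine Finset.sum_congr rfl fun i _ => ?_
      rw [map_smul, smul_eq_mul]
    have hfix : ∀ σ : M ≃ₐ[L] M, σ (∏ i, s i ^ (v i).val) = ∏ i, s i ^ (v i).val := by
      intro σ
      obtain ⟨c, hc⟩ := hex σ
      have hcH : c ∈ H := ⟨σ, hc⟩
      have h0 : φ c = 0 := hφ hcH
      rw [map_prod]
      simp only [map_pow, hc, mul_pow, Finset.prod_mul_distrib, chiS_pow]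
      rw [chiS_sum, ← hφv, h0, chiS_zero, one_mul]
    obtain ⟨z, hz⟩ := (IsGalois.mem_range_algebraMap_iff_fixed (F := L) _).mpr hfix
    have hv : v ∈ sqV y hy := by
      refine ⟨z, (algebraMap L M).injective ?_⟩
      rw [map_pow, hz, map_prod, ← Finset.prod_pow]
      refine Finset.prod_congr rfl fun i _ => ?_
      rw [map_pow, ← hs, pow_right_comm]
    rw [hV, Submodule.mem_bot] at hv
    apply hφ0
    ext c
    simp only [LinearMap.coe_comp, Function.comp_apply, LinearMap.zero_apply]
    simp [hφv, hv]
  choose c hc using hex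
  have hbij : Function.Bijective c := by
    constructor
    · intro σ τ h
      apply hgen
      intro i; rw [hc, hc, h]
    · intro d
      have : d ∈ H := by rw [hH]; trivial
      obtain ⟨σ, hσ⟩ := this
      refine ⟨σ, funext fun i => chiS_inj M h2 (hs0 i) ?_⟩
      rw [← hc, hσ]
  rw [Nat.card_eq_of_bijective c hbij]
  simp

/-- Let `char K ≠ 2`, `f ∈ K[T]` monic separable of degree `n` with `f(0) ≠ 0`, `L` a
splitting field of `f` over `K` with roots `αᵢ` (so `f = ∏ (T + yᵢ)` with `yᵢ = -αᵢ`).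
Assume the only subspaces of `F₂ⁿ` invariant under all coordinate permutations induced by
elements of `G = Gal(L|K)` (acting on the roots) are `0`, the span of `(1,…,1)`, the
sum-zero hyperplane and `F₂ⁿ`. If `f(0)` and `y₁` are square-independent in `L`, then the
Galois group of `f(-T²)` over `K` has order `2ⁿ·|G|`. -/
theorem galois_group_comp_neg_X_sq_card
    (K L : Type) [Field K] [Field L] [Algebra K L] (hchar : ringChar K ≠ 2)
    (n : ℕ) (hn : 0 < n) (f : Polynomial K) (hmon : f.Monic) (hsep : f.Separable)
    (hdeg : f.natDegree = n) (h0 : f.eval 0 ≠ 0)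
    (hsplit : Polynomial.IsSplittingField K L f)
    (α : Fin n → L)
    (hroots : f.map (algebraMap K L) = ∏ i : Fin n, (Polynomial.X - Polynomial.C (α i)))
    (hinv : ∀ V : Submodule (ZMod 2) (Fin n → ZMod 2),
      (∀ (σ : L ≃ₐ[K] L) (π : Equiv.Perm (Fin n)), (∀ i, σ (α i) = α (π i)) →
        ∀ v ∈ V, (fun i => v (π i)) ∈ V) →
      (V = ⊥ ∨
       V = Submodule.span (ZMod 2) {(fun _ => 1 : Fin n → ZMod 2)} ∨
       V = LinearMap.ker (∑ i : Fin n, LinearMap.proj (R := ZMod 2)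
             (φ := fun _ : Fin n => ZMod 2) i) ∨
       V = ⊤))
    (hsqindep : ∀ a b : ℕ, a ≤ 1 → b ≤ 1 →
      (∃ z : L, (algebraMap K L (f.eval 0)) ^ a * (-α ⟨0, hn⟩) ^ b = z ^ 2) →
      a = 0 ∧ b = 0) :
    ∀ (M : Type) [Field M] [Algebra K M],
      Polynomial.IsSplittingField K M (f.comp (-(Polynomial.X ^ 2))) →
      Nat.card (M ≃ₐ[K] M) = 2 ^ n * Nat.card (L ≃ₐ[K] L) := by
  intro M _ _ hM
  have h2K : (2 : K) ≠ 0 := Ring.two_ne_zero hchar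
  have hgsep := aux_sep h2K f hsep h0
  set g := f.comp (-(Polynomial.X ^ 2)) with hg
  have hg0 : g ≠ 0 := hgsep.ne_zero
  have hfM : (f.map (algebraMap K M)).Splits := by
    have hq : (-(Polynomial.X ^ 2) : Polynomial K).natDegree ≠ 0 := by simp
    have := (Polynomial.Gal.splits_in_splittingField_of_comp f _ hq).map
      ((Polynomial.IsSplittingField.algEquiv M g).symm : g.SplittingField →ₐ[K] M).toRingHom
    rw [Polynomial.map_map] at this
    convert this using 2
    exact (AlgHom.comp_algebraMap
      ((Polynomial.IsSplittingField.algEquiv M g).symm : g.SplittingField →ₐ[K] M)).symm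
  let ι : L →ₐ[K] M := Polynomial.IsSplittingField.lift L f hfM
  let : Algebra L M := ι.toRingHom.toAlgebra
  have : IsScalarTower K L M := IsScalarTower.of_algebraMap_eq fun x => (ι.commutes x).symm
  have : FiniteDimensional K M := Polynomial.IsSplittingField.finiteDimensional M g
  have : FiniteDimensional K L := Polynomial.IsSplittingField.finiteDimensional L f
  have : IsGalois K M := IsGalois.of_separable_splitting_field hgsep
  have : IsGalois K L := IsGalois.of_separable_splitting_field hsep
  have : IsGalois L M := IsGalois.tower_top_of_isGalois K L M
  have : FiniteDimensional L M := FiniteDimensional.right K L M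
  have h2M : (2 : M) ≠ 0 := by
    have := (map_ne_zero (algebraMap K M)).mpr h2K
    rwa [map_ofNat] at this
  have hf0 : algebraMap K L (f.eval 0) = ∏ i, (-α i) := by
    have := congrArg (Polynomial.eval 0) hroots
    rw [Polynomial.eval_prod, Polynomial.eval_zero_map] at this
    simpa using this
  have hf0' : ∏ i, (-α i) ≠ 0 := by
    rw [← hf0]; exact (map_ne_zero _).mpr h0
  have hy : ∀ i, -α i ≠ 0 := fun i => Finset.prod_ne_zero_iff.mp hf0' i (Finset.mem_univ i)
  have h1v : (1 : ZMod 2).val = 1 := rfl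
  have hV : sqV (fun i => -α i) hy = ⊥ := by
    have hone : (fun _ => 1 : Fin n → ZMod 2) ∉ sqV (fun i => -α i) hy := by
      rintro ⟨z, hz⟩
      have := hsqindep 1 0 le_rfl zero_le_one ⟨z, by rw [hf0]; simpa [h1v] using hz⟩
      exact absurd this.1 one_ne_zero
    have hone' : (fun _ => 1 : Fin n → ZMod 2) + Pi.single ⟨0, hn⟩ 1 ∉ sqV (fun i => -α i) hy := by
      intro hmem
      have hprod : ∏ i, (-α i) ^ ((Pi.single ⟨0, hn⟩ 1 : Fin n → ZMod 2) i).val = -α ⟨0, hn⟩ := by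
        rw [Finset.prod_eq_single ⟨0, hn⟩]
        · simp [h1v]
        · intro b _ hb; simp [hb]
        · simp
      obtain ⟨z, hz⟩ := hmem
      choose t ht using fun i => pow_add_val (-α i) (hy i) 1
        ((Pi.single ⟨0, hn⟩ 1 : Fin n → ZMod 2) i)
      simp only [Pi.add_apply, ht, Finset.prod_mul_distrib, hprod, Finset.prod_pow, h1v,
        pow_one] at hz
      have ht0 : ∏ i, t i ≠ 0 := by
        rw [Finset.prod_ne_zero_iff]
        intro i _ h
        have := ht i
        rw [h] at this
        simp [hy i] at this
      have := hsqindep 1 1 le_rfl le_rfl ⟨z / ∏ i, t i, by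
        rw [hf0, pow_one, pow_one, div_pow, ← hz]; field_simp⟩
      exact absurd this.1 one_ne_zero
    rcases hinv (sqV (fun i => -α i) hy) (by
      rintro σ π hπ v ⟨z, hz⟩
      refine ⟨σ.symm z, σ.injective ?_⟩
      rw [map_prod, map_pow, AlgEquiv.apply_symm_apply, ← hz]
      simp only [map_pow, map_neg, hπ]
      exact Equiv.prod_comp π (fun i => (-α i) ^ (v i).val)) with h | h | h | h
    · exact h
    · exfalso; apply hone; rw [h]; exact Submodule.mem_span_singleton_self _
    · exfalso
      rw [h] at hone hone'
      simp only [LinearMap.mem_ker, LinearMap.sum_apply, LinearMap.proj_apply, Pi.add_apply,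
        Finset.sum_add_distrib, Finset.sum_pi_single', Finset.mem_univ, if_true] at hone hone'
      rcases zmod2_cases (∑ _i : Fin n, (1 : ZMod 2)) with h' | h'
      · exact hone h'
      · apply hone'; rw [h']; simp [zmod2_11]
    · exfalso; apply hone; rw [h]; trivial
  have hgM : g.map (algebraMap K M) =
      ∏ i, (-(Polynomial.X ^ 2) - Polynomial.C (algebraMap L M (α i))) := by
    rw [IsScalarTower.algebraMap_eq K L M, ← Polynomial.map_map, hg, Polynomial.map_comp, hroots,
      Polynomial.map_comp, Polynomial.map_prod, Polynomial.prod_comp]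
    simp
  have hsex : ∀ i, ∃ s : M, s ^ 2 = algebraMap L M (-α i) := by
    intro i
    have hdvd : (-(Polynomial.X ^ 2) - Polynomial.C (algebraMap L M (α i))) ∣
        g.map (algebraMap K M) := by
      rw [hgM]; exact Finset.dvd_prod_of_mem _ (Finset.mem_univ i)
    have hsp := Polynomial.Splits.of_dvd hM.splits' (Polynomial.map_ne_zero hg0) hdvd
    have hdg : (-(Polynomial.X ^ 2) - Polynomial.C (algebraMap L M (α i))).degree ≠ 0 := by
      have : (-(Polynomial.X ^ 2) - Polynomial.C (algebraMap L M (α i))).degree = 2 := by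
        compute_degree!
      rw [this]; decide
    obtain ⟨s, hs⟩ := hsp.exists_eval_eq_zero hdg
    refine ⟨s, ?_⟩
    simp at hs
    rw [map_neg]; linear_combination -hs
  choose s hs using hsex
  have hcard := kummer_card h2M (fun i => -α i) hy hV s hs (by
    intro σ τ h
    have hK : (σ.restrictScalars K : M →ₐ[K] M) = (τ.restrictScalars K : M →ₐ[K] M) := by
      apply AlgHom.ext_of_adjoin_eq_top hM.adjoin_rootSet'
      intro r hr
      have hr := (Polynomial.mem_rootSet'.mp hr).2
      rw [Polynomial.aeval_def, ← Polynomial.eval_map, hgM, Polynomial.eval_prod,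
        Finset.prod_eq_zero_iff] at hr
      obtain ⟨i, _, hi⟩ := hr
      simp at hi
      have : r ^ 2 = s i ^ 2 := by rw [hs, map_neg]; linear_combination -hi
      have hi' := h i
      rcases sq_eq_sq_iff_eq_or_eq_neg.mp this with rfl | rfl
      · simpa using hi'
      · simpa using hi'
    ext x
    exact DFunLike.congr_fun hK x)
  rw [IsGalois.card_aut_eq_finrank] at hcard ⊢
  rw [IsGalois.card_aut_eq_finrank, ← Module.finrank_mul_finrank K L M, hcard, mul_comm]
end

section
/- Let K be a field of characteristic different from 2 and let f ∈ K[T] be a monic polynomial of degree n with distinct roots α₁, …, α_n in a splitting field L of f over K; set yᵢ = −αᵢ, so f(T) = ∏_{i=1}^n (T + yᵢ). Assume the Galois group Gal(L|K) acts on the n roots as the full symmetric group S_n (equivalently |Gal(L|K)| = n!). Let δ ∈ K be the element whose image in L equals the discriminant ∏_{1 ≤ i < j ≤ n} (yᵢ − yⱼ)². If f(0) and δ are square-independent in K, and f(0) and y₁ are square-independent in K(y₁), then f(0) and y₁ are square-independent in L. -/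
/-- A sign character of a permutation group is trivial or the sign. -/
lemma aux_char {G L β : Type} [Field L] [Group G] [MulSemiringAction G L]
    [Fintype β] [DecidableEq β] (φ : Equiv.Perm β →* G) (z : L)
    (hz : ∀ s, (φ s • z) ^ 2 = z ^ 2) :
    (∀ s, φ s • z = z) ∨ (∀ s, φ s • z = ((Equiv.Perm.sign s : ℤ) : L) * z) := by
  classical
  have hpm : ∀ s, φ s • z = z ∨ φ s • z = -z := fun s => sq_eq_sq_iff_eq_or_eq_neg.mp (hz s)
  by_cases hall : ∀ s, φ s • z = z
  · exact Or.inl hall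
  right
  push Not at hall
  obtain ⟨t, ht⟩ := hall
  have hne : -z ≠ z := by
    rcases hpm t with h | h
    · exact absurd h ht
    · rwa [h] at ht
  let χ : Equiv.Perm β →* ℤˣ :=
    { toFun := fun s => if φ s • z = z then 1 else -1
      map_one' := by simp
      map_mul' := by
        intro a b
        rcases hpm a with ha | ha <;> rcases hpm b with hb | hb <;>
          simp [mul_smul, ha, hb, hne, smul_neg] }
  have hχ : ∀ s, χ s = if φ s • z = z then 1 else -1 := fun s => rfl
  have hsurj : Function.Surjective χ := by
    intro u
    rcases Int.units_eq_one_or u with rfl | rfl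
    · exact ⟨1, map_one χ⟩
    · exact ⟨t, by rw [hχ, if_neg ht]⟩
  have hs := Equiv.Perm.eq_sign_of_surjective_hom hsurj
  intro s
  rw [← hs, hχ]
  rcases hpm s with h | h
  · simp [h]
  · simp [h, hne]


/-- Let `char K ≠ 2` and let `f ∈ K[T]` be monic of degree `n` with distinct roots
`α₁, …, α_n` in a splitting field `L` (so `f = ∏ (T + yᵢ)` with `yᵢ = -αᵢ`), and assume
`Gal(L|K)` acts on the roots as the full symmetric group (i.e. `|Gal(L|K)| = n!`). Let
`δ ∈ K` map to the discriminant `∏_{i<j} (yᵢ - yⱼ)²`. If `f(0)` and `δ` are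
square-independent in `K`, and `f(0)` and `y₁` are square-independent in `K(y₁)`, then
`f(0)` and `y₁` are square-independent in `L`. -/
theorem square_independent_in_splitting_field
    (K L : Type) [Field K] [Field L] [Algebra K L] (hchar : ringChar K ≠ 2)
    (n : ℕ) (hn : 0 < n) (f : Polynomial K) (hmon : f.Monic) (hdeg : f.natDegree = n)
    (hsplit : Polynomial.IsSplittingField K L f)
    (α : Fin n → L) (hinj : Function.Injective α)
    (hroots : f.map (algebraMap K L) = ∏ i : Fin n, (Polynomial.X - Polynomial.C (α i)))
    (hGal : Nat.card (L ≃ₐ[K] L) = Nat.factorial n)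
    (δ : K)
    (hδ : algebraMap K L δ =
      ∏ i : Fin n, ∏ j ∈ Finset.Ioi i, ((-α i) - (-α j)) ^ 2)
    (hsqK : ∀ a b : ℕ, a ≤ 1 → b ≤ 1 →
      (∃ z : K, (f.eval 0) ^ a * δ ^ b = z ^ 2) → a = 0 ∧ b = 0)
    (hsqKy : ∀ a b : ℕ, a ≤ 1 → b ≤ 1 →
      (∃ z ∈ IntermediateField.adjoin K {(-α ⟨0, hn⟩ : L)},
        (algebraMap K L (f.eval 0)) ^ a * (-α ⟨0, hn⟩) ^ b = z ^ 2) → a = 0 ∧ b = 0) :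
    ∀ a b : ℕ, a ≤ 1 → b ≤ 1 →
      (∃ z : L, (algebraMap K L (f.eval 0)) ^ a * (-α ⟨0, hn⟩) ^ b = z ^ 2) →
      a = 0 ∧ b = 0 := by
  classical
  have hfsep : f.Separable := by
    rw [← Polynomial.separable_map (algebraMap K L), hroots]
    exact Polynomial.separable_prod_X_sub_C_iff.mpr hinj
  have hG : IsGalois K L := IsGalois.of_separable_splitting_field hfsep
  have hfd : FiniteDimensional K L := Polynomial.IsSplittingField.finiteDimensional L f
  have hroot : ∀ x : L, Polynomial.aeval x f = 0 ↔ ∃ i, x = α i := by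
    intro x
    rw [← Polynomial.eval_map_algebraMap, hroots, Polynomial.eval_prod, Finset.prod_eq_zero_iff]
    simp [sub_eq_zero]
  have hex : ∀ (σ : L ≃ₐ[K] L) (i : Fin n), ∃ j, σ (α i) = α j := by
    intro σ i
    rw [← hroot, Polynomial.aeval_algEquiv]
    simp [(hroot (α i)).mpr ⟨i, rfl⟩]
  choose p hp using hex
  have hpinj : ∀ σ, Function.Injective (p σ) := by
    intro σ i j h
    apply hinj
    apply σ.injective
    rw [hp, hp, h]
  let ρ : (L ≃ₐ[K] L) →* Equiv.Perm (Fin n) :=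
    { toFun := fun σ => Equiv.ofBijective (p σ) (Finite.injective_iff_bijective.mp (hpinj σ))
      map_one' := by
        ext1 i
        apply hinj
        simp [← hp]
      map_mul' := by
        intro σ τ
        ext1 i
        apply hinj
        simp [← hp] }
  have hρ : ∀ σ i, σ (α i) = α (ρ σ i) := fun σ i => hp σ i
  have hρinj : Function.Injective ρ := by
    intro σ τ h
    have h1 : (σ : L →ₐ[K] L) = (τ : L →ₐ[K] L) := by
      apply AlgHom.ext_of_adjoin_eq_top hsplit.adjoin_rootSet
      intro x hx
      obtain ⟨i, rfl⟩ := (hroot x).mp (Polynomial.aeval_eq_zero_of_mem_rootSet hx)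
      simp [hρ, h]
    ext x
    exact DFunLike.congr_fun h1 x
  have hρbij : Function.Bijective ρ := by
    rw [Nat.bijective_iff_injective_and_card]
    refine ⟨hρinj, ?_⟩
    rw [hGal]
    simp [Nat.card_eq_fintype_card, Fintype.card_perm]
  let e : (L ≃ₐ[K] L) ≃* Equiv.Perm (Fin n) := MulEquiv.ofBijective ρ hρbij
  have he : ∀ σ i, σ (α i) = α (e σ i) := hρ
  -- the square root of the discriminant
  obtain ⟨D, hD2, hDσ⟩ : ∃ D : L, D ^ 2 = algebraMap K L δ ∧
      ∀ σ : L ≃ₐ[K] L, σ D = ((Equiv.Perm.sign (e σ) : ℤ) : L) * D := by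
    refine ⟨(Matrix.vandermonde α).det, ?_, ?_⟩
    · rw [Matrix.det_vandermonde, hδ, ← Finset.prod_pow]
      refine Finset.prod_congr rfl fun i _ => ?_
      rw [← Finset.prod_pow]
      refine Finset.prod_congr rfl fun j _ => ?_
      ring
    · intro σ
      rw [← Matrix.det_permute (e σ) (Matrix.vandermonde α), ← AlgEquiv.coe_ringEquiv,
        RingEquiv.map_det]
      congr 1
      ext i j
      simp [Matrix.vandermonde_apply, he]
  have hbot : ∀ x : L, (∀ σ : L ≃ₐ[K] L, σ x = x) → ∃ y : K, algebraMap K L y = x := by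
    intro x hx
    exact IntermediateField.mem_bot.mp ((IsGalois.mem_bot_iff_fixed x).mpr hx)
  have hinjK := (algebraMap K L).injective
  have hf0 : algebraMap K L (f.eval 0) = ∏ i : Fin n, (-α i) := by
    have h := congrArg (Polynomial.eval 0) hroots
    rw [Polynomial.eval_prod] at h
    rw [Polynomial.eval_zero_map] at h
    rw [h]
    exact Finset.prod_congr rfl fun i _ => by
      rw [Polynomial.eval_sub, Polynomial.eval_X, Polynomial.eval_C, zero_sub]
  have hc0 : f.eval 0 ≠ 0 := by
    intro h
    have := hsqK 1 0 le_rfl (by norm_num) ⟨0, by simp [h]⟩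
    omega
  have hd0 : δ ≠ 0 := by
    intro h
    have := hsqK 0 1 (by norm_num) le_rfl ⟨0, by simp [h]⟩
    omega
  set c := f.eval 0 with hc
  rintro a b ha hb ⟨z, hz⟩
  have hsgn : ∀ s : Equiv.Perm (Fin n),
      ((Equiv.Perm.sign s : ℤ) : L) * ((Equiv.Perm.sign s : ℤ) : L) = 1 := by
    intro s
    rcases Int.units_eq_one_or (Equiv.Perm.sign s) with h | h <;> simp [h]
  obtain rfl | rfl : b = 0 ∨ b = 1 := by omega
  · refine ⟨?_, rfl⟩
    rw [pow_zero, mul_one] at hz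
    have key := aux_char (e.symm : Equiv.Perm (Fin n) →* (L ≃ₐ[K] L)) z (by
      intro s
      change ((e.symm s) z) ^ 2 = z ^ 2
      rw [← map_pow, ← hz, map_pow, AlgEquiv.commutes])
    rcases key with key | key
    · obtain ⟨y, rfl⟩ := hbot z (fun σ => by simpa using key (e σ))
      exact (hsqK a 0 ha hb ⟨y, by apply hinjK; simpa using hz⟩).1
    · obtain ⟨y, hy⟩ := hbot (z * D) (fun σ => by
        have h1 : σ z = ((Equiv.Perm.sign (e σ) : ℤ) : L) * z := by simpa using key (e σ)
        rw [map_mul, h1, hDσ]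
        linear_combination z * D * hsgn (e σ))
      exact (hsqK a 1 ha le_rfl ⟨y, by
        apply hinjK
        rw [map_mul, map_pow, map_pow, map_pow, hy, pow_one, ← hD2, hz]; ring⟩).1
  · exfalso
    set o : Fin n := ⟨0, hn⟩ with ho
    rw [pow_one] at hz
    let ψ : Equiv.Perm {i : Fin n // i ≠ o} →* (L ≃ₐ[K] L) :=
      (e.symm : Equiv.Perm (Fin n) →* (L ≃ₐ[K] L)).comp Equiv.Perm.ofSubtype
    have hψe : ∀ s, e (ψ s) = Equiv.Perm.ofSubtype s := fun s => by simp [ψ]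
    have key := aux_char ψ z (by
      intro s
      change ((ψ s) z) ^ 2 = z ^ 2
      rw [← map_pow, ← hz, map_mul, map_pow, AlgEquiv.commutes, map_neg, he, hψe,
        Equiv.Perm.ofSubtype_apply_of_not_mem s (by simp)])
    have hstab : ∀ σ : L ≃ₐ[K] L, e σ o = o → ∃ s, ψ s = σ ∧
        Equiv.Perm.sign s = Equiv.Perm.sign (e σ) := by
      intro σ hσ
      have h1 : ∀ x, e σ x ≠ o ↔ x ≠ o := by
        intro x
        rw [not_iff_not]
        constructor
        · intro h; exact (e σ).injective (h.trans hσ.symm)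
        · rintro rfl; exact hσ
      have h2 : Equiv.Perm.ofSubtype ((e σ).subtypePerm (p := fun x => x ≠ o) h1) = e σ := by
        apply Equiv.Perm.ofSubtype_subtypePerm
        rintro x hx rfl
        exact hx hσ
      refine ⟨(e σ).subtypePerm (p := fun x => x ≠ o) h1, ?_, ?_⟩
      · apply e.injective
        rw [hψe, h2]
      · rw [← Equiv.Perm.sign_ofSubtype, h2]
    rcases key with key | key
    · have hmem : z ∈ IntermediateField.adjoin K {(-α o : L)} := by
        rw [← IsGalois.fixedField_fixingSubgroup (IntermediateField.adjoin K {(-α o : L)})]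
        rw [IntermediateField.mem_fixedField_iff]
        intro σ hσ
        rw [IntermediateField.mem_fixingSubgroup_iff] at hσ
        have h1 := hσ _ (IntermediateField.mem_adjoin_simple_self K (-α o))
        have h2 : e σ o = o := by
          apply hinj
          rw [← he]
          simpa using h1
        obtain ⟨s, rfl, -⟩ := hstab σ h2
        exact key s
      have := hsqKy a 1 ha le_rfl ⟨z, hmem, by rw [pow_one]; exact hz⟩
      omega
    · have hw : ∀ σ : L ≃ₐ[K] L, e σ o = o → σ (z * D) = z * D := by
        intro σ hσ
        obtain ⟨s, hs1, hs2⟩ := hstab σ hσ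
        have h1 : σ z = ((Equiv.Perm.sign (e σ) : ℤ) : L) * z := by
          rw [← hs2, ← hs1]; exact key s
        rw [map_mul, h1, hDσ]
        linear_combination z * D * hsgn (e σ)
      have hw2 : (z * D) ^ 2 = algebraMap K L (c ^ a * δ) * (-α o) := by
        rw [mul_pow, ← hz, hD2, map_mul, map_pow]; ring
      generalize z * D = w at hw hw2
      let g : Fin n → (L ≃ₐ[K] L) := fun i => e.symm (Equiv.swap o i)
      have hg : ∀ i, e (g i) o = i := fun i => by simp [g]
      have hσg : ∀ (σ : L ≃ₐ[K] L) i, σ (g i w) = g (e σ i) w := by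
        intro σ i
        have h := hw ((g (e σ i))⁻¹ * (σ * g i)) (by
          rw [map_mul, map_inv, map_mul, Equiv.Perm.mul_apply, Equiv.Perm.inv_eq_iff_eq, hg,
            Equiv.Perm.mul_apply, hg])
        have h' := congrArg (g (e σ i)) h
        rw [← h', ← AlgEquiv.mul_apply, ← AlgEquiv.mul_apply, mul_inv_cancel_left]
      obtain ⟨y, hy⟩ := hbot (∏ i, g i w) (fun σ => by
        rw [map_prod]
        simp_rw [hσg]
        exact Equiv.prod_comp (e σ) (fun i => g i w))
      have hy2 : (c ^ a * δ) ^ n * c = y ^ 2 := by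
        apply hinjK
        rw [map_pow, hy, ← Finset.prod_pow]
        simp_rw [← map_pow, hw2, map_mul (g _), AlgEquiv.commutes, map_neg, he, hg]
        rw [Finset.prod_mul_distrib, ← hf0]
        simp
      rcases Nat.even_or_odd' n with ⟨k, hk | hk⟩
      · have := hsqK 1 0 le_rfl (by norm_num) ⟨y / (c ^ a * δ) ^ k, by
          rw [div_pow, ← hy2, hk]; field_simp; ring⟩
        omega
      · obtain rfl | rfl : a = 0 ∨ a = 1 := by omega
        · have := hsqK 1 1 le_rfl le_rfl ⟨y / δ ^ k, by
            rw [div_pow, ← hy2, hk]; field_simp; ring⟩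
          omega
        · have := hsqK 0 1 (by norm_num) le_rfl ⟨y / (c ^ (k + 1) * δ ^ k), by
            rw [div_pow, ← hy2, hk]; field_simp; ring⟩
          omega
end

section
/- Let F be a field of characteristic different from 2, let n > m ≥ 2 be integers, and let f₀ ∈ F[T] be a monic polynomial of degree n. Let K = F(A₀, …, A_m) be the field of rational functions in m + 1 independent variables A₀, …, A_m over F, and set f(T) = f₀(T) + ∑_{i=0}^m Aᵢ Tⁱ ∈ K[T]. Then the Galois group of f over K is isomorphic to the symmetric group S_n, and the Galois group of f(−T²) over K has order 2ⁿ · n!. -/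
open Polynomial

/-- Newton iteration; the polynomial need not be monic. -/
lemma adic_hensel {R : Type*} [CommRing R] (I : Ideal R) [IsAdicComplete I R]
    (f : R[X]) (a₀ : R) (h₁ : f.eval a₀ ∈ I)
    (h₂ : IsUnit (Ideal.Quotient.mk I (f.derivative.eval a₀))) :
    ∃ a, f.IsRoot a ∧ a - a₀ ∈ I := by
    classical
      let f' := derivative f
      let c : ℕ → R := fun n => Nat.recOn n a₀ fun _ b => b - f.eval b * Ring.inverse (f'.eval b)
      have hc : ∀ n, c (n + 1) = c n - f.eval (c n) * Ring.inverse (f'.eval (c n)) := by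
        intro n
        simp only [c]
      have hc_mod : ∀ n, c n ≡ a₀ [SMOD I] := by
        intro n
        induction n with
        | zero => rfl
        | succ n ih => ?_
        rw [hc, sub_eq_add_neg, ← add_zero a₀]
        refine ih.add ?_
        rw [SModEq.zero, Ideal.neg_mem_iff]
        refine I.mul_mem_right _ ?_
        rw [← SModEq.zero] at h₁ ⊢
        exact (ih.eval f).trans h₁
      have hf'c : ∀ n, IsUnit (f'.eval (c n)) := by
        intro n
        have := isLocalHom_of_le_jacobson_bot I (IsAdicComplete.le_jacobson_bot I)
        apply IsUnit.of_map (Ideal.Quotient.mk I)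
        convert! h₂ using 1
        exact SModEq.def.mp ((hc_mod n).eval _)
      have hfcI : ∀ n, f.eval (c n) ∈ I ^ (n + 1) := by
        intro n
        induction n with
        | zero => simpa only [Nat.rec_zero, zero_add, pow_one] using! h₁
        | succ n ih => ?_
        rw [← taylor_eval_sub (c n), hc, sub_eq_add_neg, sub_eq_add_neg,
          add_neg_cancel_comm]
        rw [eval_eq_sum, sum_over_range' _ _ _ (lt_add_of_pos_right _ zero_lt_two), ←
          Finset.sum_range_add_sum_Ico _ (Nat.le_add_left _ _)]
        swap
        · intro i
          rw [zero_mul]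
        refine Ideal.add_mem _ ?_ ?_
        · rw [← one_add_one_eq_two, Finset.sum_range_succ, Finset.range_one, Finset.sum_singleton,
            taylor_coeff_zero, taylor_coeff_one, pow_zero, pow_one, mul_one, mul_neg,
            mul_left_comm, Ring.mul_inverse_cancel _ (hf'c n), mul_one, add_neg_cancel]
          exact Ideal.zero_mem _
        · refine Submodule.sum_mem _ ?_
          simp only [Finset.mem_Ico]
          rintro i ⟨h2i, _⟩
          have aux : n + 2 ≤ i * (n + 1) := by trans 2 * (n + 1) <;> nlinarith only [h2i]
          refine Ideal.mul_mem_left _ _ (Ideal.pow_le_pow_right aux ?_)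
          rw [pow_mul']
          exact Ideal.pow_mem_pow ((Ideal.neg_mem_iff _).2 <| Ideal.mul_mem_right _ _ ih) _
      have aux : ∀ m n, m ≤ n → c m ≡ c n [SMOD (I ^ m • ⊤ : Ideal R)] := by
        intro m n hmn
        rw [← Ideal.one_eq_top, Ideal.smul_eq_mul, mul_one]
        obtain ⟨k, rfl⟩ := Nat.exists_eq_add_of_le hmn
        clear hmn
        induction k with
        | zero => rw [add_zero]
        | succ k ih => ?_
        rw [← add_assoc, hc, ← add_zero (c m), sub_eq_add_neg]
        refine ih.add ?_
        symm
        rw [SModEq.zero, Ideal.neg_mem_iff]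
        refine Ideal.mul_mem_right _ _ (Ideal.pow_le_pow_right ?_ (hfcI _))
        rw [add_assoc]
        exact le_self_add
      obtain ⟨a, ha⟩ := IsPrecomplete.prec' c (aux _ _)
      refine ⟨a, ?_, ?_⟩
      · show f.IsRoot a
        suffices ∀ n, f.eval a ≡ 0 [SMOD (I ^ n • ⊤ : Ideal R)] by exact IsHausdorff.haus' _ this
        intro n
        specialize ha n
        rw [← Ideal.one_eq_top, Ideal.smul_eq_mul, mul_one] at ha ⊢
        refine (ha.symm.eval f).trans ?_
        rw [SModEq.zero]
        exact Ideal.pow_le_pow_right le_self_add (hfcI _)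
      · show a - a₀ ∈ I
        specialize ha (0 + 1)
        rw [hc, pow_one, ← Ideal.one_eq_top, Ideal.smul_eq_mul, mul_one, sub_eq_add_neg] at ha
        rw [← SModEq.sub_mem, ← add_zero a₀]
        refine ha.symm.trans (SModEq.rfl.add ?_)
        rw [SModEq.zero, Ideal.neg_mem_iff]
        exact Ideal.mul_mem_right _ _ h₁

lemma ps_hensel {k : Type} [Field k] (p : (PowerSeries k)[X]) (a₀ : k)
    (h1 : (p.map (PowerSeries.constantCoeff (R := k))).eval a₀ = 0)
    (h2 : (p.map (PowerSeries.constantCoeff (R := k))).derivative.eval a₀ ≠ 0) :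
    ∃ a : PowerSeries k, p.eval a = 0 ∧ PowerSeries.constantCoeff a = a₀ := by
  obtain ⟨a, ha, h⟩ := adic_hensel (Ideal.span {(PowerSeries.X : PowerSeries k)}) p
    (PowerSeries.C a₀) (by
      rw [Ideal.mem_span_singleton, PowerSeries.X_dvd_iff]
      conv_lhs => rw [← eval_map_apply]
      simpa using h1) (by
      refine IsUnit.map _ ?_
      rw [PowerSeries.isUnit_iff_constantCoeff, isUnit_iff_ne_zero, ← eval_map_apply]
      simpa [derivative_map] using h2)
  refine ⟨a, ha, ?_⟩
  rw [Ideal.mem_span_singleton, PowerSeries.X_dvd_iff, map_sub, sub_eq_zero] at h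
  simpa using h

lemma ps_unique {k : Type} [Field k] (p : (PowerSeries k)[X]) (a b : PowerSeries k)
    (ha : p.eval a = 0) (hb : p.eval b = 0)
    (hab : PowerSeries.constantCoeff a = PowerSeries.constantCoeff b)
    (h2 : (p.map (PowerSeries.constantCoeff (R := k))).derivative.eval (PowerSeries.constantCoeff a) ≠ 0) :
    a = b := by
  apply IsLocalRing.eq_of_eval_eq_zero_of_not_isUnit_sub ha hb
  · rw [PowerSeries.isUnit_iff_constantCoeff, map_sub, hab, sub_self]; exact not_isUnit_zero
  · rw [PowerSeries.isUnit_iff_constantCoeff, isUnit_iff_ne_zero]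
    rwa [derivative_map, eval_map_apply] at h2

lemma rescale_neg_neg {k : Type} [Field k] (a : PowerSeries k) :
    PowerSeries.rescale (-1 : k) (PowerSeries.rescale (-1 : k) a) = a := by
  rw [PowerSeries.rescale_rescale]; simp

lemma core {k : Type} [Field k] [IsAlgClosed k] (h2 : (2 : k) ≠ 0) (G : k[X]) (s : k)
    (hs : G.eval s ≠ 0) (hG : ∀ z, G.eval z = 0 → G.derivative.eval z ≠ 0)
    (P : (PowerSeries k)[X])
    (hP : P = (X - C (PowerSeries.C s)) ^ 2 * G.map (PowerSeries.C (R := k))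
      - C (PowerSeries.X ^ 2)) :
    ∃ x y : PowerSeries k, x ≠ y ∧ P.eval x = 0 ∧ P.eval y = 0 ∧
      PowerSeries.rescale (-1 : k) x = y ∧ PowerSeries.rescale (-1 : k) y = x ∧
      ∃ Z : Finset (PowerSeries k), Z.card = G.natDegree ∧ x ∉ Z ∧ y ∉ Z ∧
        ∀ z ∈ Z, P.eval z = 0 ∧ PowerSeries.rescale (-1 : k) z = z := by
  classical
  have hcc : ∀ a : PowerSeries k, PowerSeries.constantCoeff (PowerSeries.rescale (-1 : k) a)
      = PowerSeries.constantCoeff a := by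
    intro a
    rw [← PowerSeries.coeff_zero_eq_constantCoeff_apply, PowerSeries.coeff_rescale]; simp
  have hinv : P.map (PowerSeries.rescale (-1 : k)) = P := by
    have hC : (PowerSeries.rescale (-1 : k)).comp (PowerSeries.C (R := k)) = PowerSeries.C := by
      ext a n
      simp [PowerSeries.coeff_rescale, PowerSeries.coeff_C]
      split_ifs with h <;> simp [h]
    have hC' : ∀ a : k, PowerSeries.rescale (-1 : k) (PowerSeries.C a) = PowerSeries.C a :=
      fun a => RingHom.congr_fun hC a
    rw [hP]
    simp only [Polynomial.map_sub, Polynomial.map_mul, Polynomial.map_pow, map_X, map_C,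
      Polynomial.map_map, hC, hC', map_pow, PowerSeries.rescale_X]
    simp
  have hinvr : ∀ a, P.eval a = 0 → P.eval (PowerSeries.rescale (-1 : k) a) = 0 := by
    intro a ha
    conv_lhs => rw [← hinv]
    rw [eval_map_apply, ha, map_zero]
  have hid : (PowerSeries.constantCoeff (R := k)).comp (PowerSeries.C (R := k)) = RingHom.id k := by
    ext a; simp
  have hmap : P.map (PowerSeries.constantCoeff (R := k)) = (X - C s) ^ 2 * G := by
    have : (PowerSeries.constantCoeff (R := k)).comp (PowerSeries.C (R := k)) = RingHom.id k := by
      ext a; simp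
    rw [hP]
    simp [Polynomial.map_map, this]
  have hsimple : ∀ z, G.eval z = 0 → ((X - C s) ^ 2 * G).derivative.eval z ≠ 0 := by
    intro z hz
    have hzs : z ≠ s := by rintro rfl; exact hs hz
    simp [derivative_mul, hz, hG z hz, sub_ne_zero.mpr hzs]
  have hex : ∀ z : k, ∃ a : PowerSeries k, G.eval z = 0 →
      (P.eval a = 0 ∧ PowerSeries.constantCoeff a = z) := by
    intro z
    by_cases hz : G.eval z = 0
    · obtain ⟨a, h⟩ := ps_hensel P z (by rw [hmap]; simp [hz]) (by rw [hmap]; exact hsimple z hz)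
      exact ⟨a, fun _ => h⟩
    · exact ⟨0, fun h => absurd h hz⟩
  choose ζ hζ using hex
  obtain ⟨w, hw⟩ : ∃ w : k, w ^ 2 = (G.eval s)⁻¹ := IsAlgClosed.exists_pow_nat_eq _ two_pos
  have hw0 : w ≠ 0 := by rintro rfl; simp at hw; exact hs hw.symm
  obtain ⟨u, hu, hu0⟩ := ps_hensel
    (X ^ 2 * (G.map (PowerSeries.C (R := k))).comp (C (PowerSeries.C s) + C PowerSeries.X * X) - 1)
    w (by
      simp [Polynomial.map_comp, Polynomial.map_map, hid, hw, hs]) (by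
      simp [Polynomial.map_comp, Polynomial.map_map, hid, hs, hw0]
      rwa [one_add_one_eq_two])
  have hx : P.eval (PowerSeries.C s + PowerSeries.X * u) = 0 := by
    rw [hP]
    simp at hu
    simp
    linear_combination (PowerSeries.X ^ 2) * hu
  set x := PowerSeries.C s + PowerSeries.X * u with hxdef
  have hx0 : PowerSeries.constantCoeff x = s := by simp [hxdef]
  refine ⟨x, PowerSeries.rescale (-1 : k) x, ?_, hx, hinvr x hx, rfl, rescale_neg_neg x,
    G.roots.toFinset.image ζ, ?_, ?_, ?_, ?_⟩
  · intro h
    have := congrArg (PowerSeries.coeff 1) h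
    have h1 : PowerSeries.coeff 1 x = w := by
      rw [hxdef, map_add, PowerSeries.coeff_C, PowerSeries.coeff_succ_X_mul 0]; simp [hu0]
    rw [PowerSeries.coeff_rescale, h1] at this
    have h3 : 2 * w = 0 := by linear_combination this
    exact (mul_ne_zero h2 hw0) h3
  · rw [Finset.card_image_of_injOn]
    · rw [Multiset.toFinset_card_of_nodup, IsAlgClosed.card_roots_eq_natDegree]
      apply nodup_roots
      have hG0 : G ≠ 0 := by rintro rfl; simp at hs
      rw [separable_def, isCoprime_iff_aeval_ne_zero_of_isAlgClosed k k]
      intro a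
      simp only [coe_aeval_eq_eval]
      by_cases h : G.eval a = 0
      · exact Or.inr (hG a h)
      · exact Or.inl h
    · intro a ha b hb hab
      simp only [Finset.mem_coe, Multiset.mem_toFinset] at ha hb
      rw [← (hζ a (isRoot_of_mem_roots ha)).2, ← (hζ b (isRoot_of_mem_roots hb)).2, hab]
  · intro h
    obtain ⟨z, hz, h⟩ := Finset.mem_image.mp h
    have hz := isRoot_of_mem_roots (Multiset.mem_toFinset.mp hz)
    have : z = s := by rw [← (hζ z hz).2, h, hx0]
    exact hs (this ▸ hz)
  · intro h
    obtain ⟨z, hz, h⟩ := Finset.mem_image.mp h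
    have hz := isRoot_of_mem_roots (Multiset.mem_toFinset.mp hz)
    have : z = s := by rw [← (hζ z hz).2, h, hcc, hx0]
    exact hs (this ▸ hz)
  · intro a ha
    obtain ⟨z, hz, rfl⟩ := Finset.mem_image.mp ha
    have hz := isRoot_of_mem_roots (Multiset.mem_toFinset.mp hz)
    refine ⟨(hζ z hz).1, ?_⟩
    apply ps_unique P _ _ (hinvr _ (hζ z hz).1) (hζ z hz).1 (hcc _)
    rw [hmap, hcc, (hζ z hz).2]
    exact hsimple z hz
/-- `W` is algebraically closed inside `A`. -/
def RelClosed {F A : Type} [Field F] [Field A] [Algebra F A] (W : IntermediateField F A) : Prop :=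
  ∀ z : A, IsAlgebraic W z → z ∈ W

lemma mem_matroid_closure {F A : Type} [Field F] [Field A] [Algebra F A] (s : Set A) (z : A) :
    z ∈ (AlgebraicIndependent.matroid F A).closure s ↔
      IsAlgebraic (IntermediateField.adjoin F s) z := by
  rw [AlgebraicIndependent.matroid_closure_eq, SetLike.mem_coe, Subalgebra.mem_algebraicClosure]
  exact Iff.symm IntermediateField.isAlgebraic_adjoin_iff

lemma exists_relClosed {F A : Type} [Field F] [Field A] [Algebra F A] (s : Set A) :
    ∃ W : IntermediateField F A, RelClosed W ∧ (W : Set A) =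
      (AlgebraicIndependent.matroid F A).closure s := by
  refine ⟨(algebraicClosure (IntermediateField.adjoin F s) A).restrictScalars F, ?_, ?_⟩
  · intro z hz
    have : IsAlgebraic (algebraicClosure (IntermediateField.adjoin F s) A) z := hz
    exact mem_algebraicClosure_iff.mpr (this.restrictScalars (IntermediateField.adjoin F s))
  · ext z
    rw [mem_matroid_closure]
    exact mem_algebraicClosure_iff

lemma indep_exchange {F A ι : Type} [Finite ι] [Field F] [Field A] [Algebra F A] {x a : ι → A}
    (hx : AlgebraicIndependent F x)
    (h : ∀ W : IntermediateField F A, RelClosed W → (∀ i, a i ∈ W) → ∀ i, x i ∈ W) :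
    AlgebraicIndependent F a := by
  obtain ⟨W, hW, hWs⟩ := exists_relClosed (F := F) (Set.range a)
  have hsub : Set.range x ⊆ (AlgebraicIndependent.matroid F A).closure (Set.range a) := by
    rw [← hWs]
    rintro _ ⟨i, rfl⟩
    refine h W hW (fun i => ?_) i
    have : a i ∈ (W : Set A) := by
      rw [hWs]
      exact Matroid.mem_closure_of_mem' _ ⟨i, rfl⟩ (by simp)
    exact this
  have hxi : (AlgebraicIndependent.matroid F A).Indep (Set.range x) := 
    AlgebraicIndependent.matroid_indep_iff.mpr hx.to_subtype_range
  have h1 : (Set.range x).encard ≤ (AlgebraicIndependent.matroid F A).eRk (Set.range a) := by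
    rw [← Matroid.eRk_closure_eq]
    exact hxi.encard_le_eRk_of_subset hsub
  have h2 : (Set.range a).encard ≤ (Set.range x).encard := by
    rw [← Set.image_univ, ← Set.image_univ, hx.injective.encard_image]
    exact Set.encard_image_le _ _
  have hai : (AlgebraicIndependent.matroid F A).Indep (Set.range a) := by
    rw [Matroid.indep_iff_eRk_eq_encard_of_finite (Set.finite_range a)]
    exact le_antisymm (Matroid.eRk_le_encard _ _) (h2.trans h1)
  have hinj : Function.Injective a := by
    have h3 : (Set.range x).encard ≤ (Set.range a).encard := h1.trans (Matroid.eRk_le_encard _ _)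
    rw [← Set.image_univ, hx.injective.encard_image, ← Set.image_univ] at h3
    have := Set.Finite.injOn_of_encard_image_eq Set.finite_univ (le_antisymm (Set.encard_image_le a _) h3)
    exact Set.injOn_univ.mp this
  exact AlgebraicIndependent.of_subtype_range hinj (AlgebraicIndependent.matroid_indep_iff.mp hai)

lemma exists_sep {F A ι : Type} [Field F] [Field A] [Algebra F A] {x : ι → A}
    (hx : AlgebraicIndependent F x) (i₀ : ι) :
    ∃ W : IntermediateField F A, RelClosed W ∧ (∀ i, i ≠ i₀ → x i ∈ W) ∧ x i₀ ∉ W := by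
  obtain ⟨W, hW, hWs⟩ := exists_relClosed (F := F) (Set.range x \ {x i₀})
  have hxi : (AlgebraicIndependent.matroid F A).Indep (Set.range x) := 
    AlgebraicIndependent.matroid_indep_iff.mpr hx.to_subtype_range
  refine ⟨W, hW, ?_, ?_⟩
  · intro i hi
    have : x i ∈ (W : Set A) := by
      rw [hWs]
      exact Matroid.mem_closure_of_mem' _ ⟨⟨i, rfl⟩, fun h => hi (hx.injective h)⟩ (by simp)
    exact this
  · intro h
    have : x i₀ ∈ (W : Set A) := h
    rw [hWs] at this
    exact hxi.notMem_closure_sdiff_of_mem ⟨i₀, rfl⟩ this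

/-- `f₀ + ∑ aᵢ Tⁱ`. -/
noncomputable def genPoly {F A : Type} [Field F] [CommRing A] [Algebra F A] (f₀ : F[X]) {N : ℕ}
    (a : Fin N → A) : A[X] :=
  f₀.map (algebraMap F A) + ∑ i, C (a i) * X ^ (i : ℕ)

lemma genPoly_map {F A B : Type} [Field F] [CommRing A] [Algebra F A] [CommRing B] [Algebra F B]
    (f₀ : F[X]) {N : ℕ} (a : Fin N → A) (φ : A →ₐ[F] B) :
    (genPoly f₀ a).map (φ : A →+* B) = genPoly f₀ (fun i => φ (a i)) := by
  simp [genPoly, Polynomial.map_map, Polynomial.map_sum]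

lemma genPoly_cons {F A : Type} [Field F] [CommRing A] [Algebra F A] (f₀ : F[X]) {N : ℕ}
    (a : Fin (N + 1) → A) :
    genPoly f₀ a = f₀.map (algebraMap F A) + (C (a 0) + X * genPoly (0 : F[X]) (fun j => a j.succ)) := by
  simp only [genPoly, Fin.sum_univ_succ, Finset.mul_sum, Polynomial.map_zero, zero_add, mul_add]
  congr 2
  · simp
  · refine Finset.sum_congr rfl fun i _ => ?_
    simp only [Fin.val_succ]; ring

lemma relClosed_root {F A : Type} [Field F] [Field A] [Algebra F A] {W : IntermediateField F A}
    (hW : RelClosed W) {z : A} (p : A[X]) (hp : p ≠ 0) (hc : ∀ i, p.coeff i ∈ W)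
    (hz : p.eval z = 0) : z ∈ W := by
  apply hW
  have : p ∈ Polynomial.lifts (algebraMap W A) := by
    rw [Polynomial.lifts_iff_coeff_lifts]
    intro i; exact ⟨⟨_, hc i⟩, rfl⟩
  obtain ⟨q, rfl⟩ := (Polynomial.mem_lifts _).mp this
  refine ⟨q, fun h => hp (by simp [h]), ?_⟩
  rwa [eval_map_algebraMap] at hz

lemma eval_mem {F A : Type} [Field F] [Field A] [Algebra F A] {W : IntermediateField F A}
    (p : A[X]) (hc : ∀ i, p.coeff i ∈ W) {z : A} (hz : z ∈ W) : p.eval z ∈ W := by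
  rw [eval_eq_sum_range]
  exact sum_mem fun i _ => mul_mem (hc i) (pow_mem hz i)

lemma deriv_mem {F A : Type} [Field F] [Field A] [Algebra F A] {W : IntermediateField F A}
    (p : A[X]) (hc : ∀ i, p.coeff i ∈ W) (i : ℕ) : p.derivative.coeff i ∈ W := by
  rw [coeff_derivative]
  exact mul_mem (hc _) (by exact_mod_cast natCast_mem W (i + 1))

lemma genPoly_mem {F A : Type} [Field F] [Field A] [Algebra F A] {W : IntermediateField F A}
    (f₀ : F[X]) {N : ℕ} (a : Fin N → A) (ha : ∀ j, a j ∈ W) (i : ℕ) :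
    (genPoly f₀ a).coeff i ∈ W := by
  simp only [genPoly, coeff_add, coeff_map, finsetSum_coeff, coeff_C_mul, coeff_X_pow]
  refine add_mem (W.algebraMap_mem _) (sum_mem fun j _ => mul_mem (ha j) ?_)
  split_ifs
  · exact one_mem _
  · exact zero_mem _

lemma genPoly_sep {F A : Type} [Field F] [Field A] [Algebra F A] (f₀ : F[X]) {N : ℕ}
    (a : Fin (N + 2) → A) (ha : AlgebraicIndependent F a) (y : A)
    (h : (genPoly f₀ a).eval y = 0) (h' : (genPoly f₀ a).derivative.eval y = 0) : False := by
  have := indep_exchange (a := Fin.cons y (Fin.cons y fun j => a j.succ.succ)) ha (by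
    intro W hW hb
    have hy : y ∈ W := hb 0
    have hj : ∀ j : Fin N, a j.succ.succ ∈ W := fun j => hb j.succ.succ
    have e : genPoly f₀ a = genPoly f₀ (fun j : Fin 0 => (0 : A)) + C (a 0) + X * C (a 1)
      + X ^ 2 * genPoly (0 : F[X]) (fun j => a j.succ.succ) := by
      rw [genPoly_cons, genPoly_cons (0 : F[X])]
      simp [genPoly]; ring
    rw [e] at h h'
    set p := genPoly f₀ (fun j : Fin 0 => (0 : A)) with hp
    set q := genPoly (0 : F[X]) (fun j => a j.succ.succ) with hq
    have hpm : ∀ i, p.coeff i ∈ W := genPoly_mem _ _ (fun j => j.elim0)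
    have hqm : ∀ i, q.coeff i ∈ W := genPoly_mem _ _ hj
    simp at h h'
    have m1 := eval_mem p hpm hy
    have m2 := eval_mem q hqm hy
    have m3 := eval_mem _ (deriv_mem p hpm) hy
    have m4 := eval_mem _ (deriv_mem q hqm) hy
    have h1 : a 1 ∈ W := by
      have : a 1 = - (p.derivative.eval y + (2 * y * q.eval y + y ^ 2 * q.derivative.eval y)) := by
        linear_combination h'
      rw [this]
      exact neg_mem (add_mem m3 (add_mem (mul_mem (mul_mem (ofNat_mem W 2) hy) m2)
        (mul_mem (pow_mem hy 2) m4)))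
    have h0 : a 0 ∈ W := by
      have : a 0 = - (p.eval y + y * a 1 + y ^ 2 * q.eval y) := by linear_combination h
      rw [this]
      exact neg_mem (add_mem (add_mem m1 (mul_mem hy h1)) (mul_mem (pow_mem hy 2) m2))
    intro i
    refine Fin.cases h0 (fun i => Fin.cases h1 (fun i => hj i) i) i)
  have := this.injective (a₁ := 0) (a₂ := 1) rfl
  simp at this


/-- The automorphism `v ↦ -v` of `k⟦v⟧`. -/
noncomputable def negEquiv (k : Type) [Field k] : PowerSeries k ≃+* PowerSeries k :=
  RingEquiv.ofRingHom (PowerSeries.rescale (-1 : k)) (PowerSeries.rescale (-1 : k))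
    (RingHom.ext rescale_neg_neg) (RingHom.ext rescale_neg_neg)

/-- The automorphism `v ↦ -v` of `k((v))`. -/
noncomputable def negEquivFrac (k : Type) [Field k] :
    FractionRing (PowerSeries k) ≃+* FractionRing (PowerSeries k) :=
  IsFractionRing.ringEquivOfRingEquiv (negEquiv k)

lemma negEquivFrac_algebraMap (k : Type) [Field k] (a : PowerSeries k) :
    negEquivFrac k (algebraMap _ _ a) = algebraMap _ _ (PowerSeries.rescale (-1 : k) a) := by
  simp [negEquivFrac, negEquiv]

lemma roots_of_card {M : Type} [Field M] (p : M[X]) (hp : p ≠ 0) (S : Finset M)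
    (hS : ∀ x ∈ S, p.eval x = 0) (hc : p.natDegree ≤ S.card) :
    p.Splits ∧ ∀ x, p.eval x = 0 → x ∈ S := by
  have hle : S.val ≤ p.roots := by
    rw [Multiset.le_iff_subset S.nodup]
    intro x hx
    exact (mem_roots hp).mpr (hS x hx)
  have heq : S.val = p.roots := Multiset.eq_of_le_of_card_le hle ((card_roots' p).trans hc)
  constructor
  · rw [splits_iff_card_roots]
    refine le_antisymm (card_roots' p) (hc.trans ?_)
    rw [← heq]; rfl
  · intro x hx
    have : x ∈ p.roots := (mem_roots hp).mpr hx
    rw [← heq] at this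
    exact this

lemma exists_transposition {K N k : Type} [Field K] [Field N] [Algebra K N] [Field k]
    [IsAlgClosed k] (h2 : (2 : k) ≠ 0) (q : K[X]) [hN : IsSplittingField K N q] (G : k[X]) (s : k)
    (hs : G.eval s ≠ 0) (hG : ∀ z, G.eval z = 0 → G.derivative.eval z ≠ 0)
    (φ : K →+* FractionRing (PowerSeries k))
    (hφ : ∀ x, negEquivFrac k (φ x) = φ x)
    (hq : q.map φ = ((X - C (PowerSeries.C s)) ^ 2 * G.map (PowerSeries.C (R := k))
      - C (PowerSeries.X ^ 2)).map (algebraMap (PowerSeries k) _)) :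
    ∃ τ : N ≃ₐ[K] N, ∃ x y : N, x ≠ y ∧ aeval x q = 0 ∧ aeval y q = 0 ∧ τ x = y ∧ τ y = x ∧
      ∀ z, aeval z q = 0 → z ≠ x → z ≠ y → τ z = z := by
  classical
  set P := ((X - C (PowerSeries.C s)) ^ 2 * G.map (PowerSeries.C (R := k))
      - C (PowerSeries.X ^ 2)) with hP
  have hG0 : G ≠ 0 := by rintro rfl; simp at hs
  obtain ⟨x, y, hxy, hx, hy, hσx, hσy, Z, hZc, hxZ, hyZ, hZ⟩ := core h2 G s hs hG P hP
  set M := FractionRing (PowerSeries k)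
  set ι := algebraMap (PowerSeries k) M
  have hι : Function.Injective ι := IsFractionRing.injective _ _
  have hdeg : P.natDegree = G.natDegree + 2 := by
    have e : ((X - C (PowerSeries.C s)) ^ 2 * G.map (PowerSeries.C (R := k))).natDegree
        = G.natDegree + 2 := by
      rw [natDegree_mul (pow_ne_zero _ (X_sub_C_ne_zero _))
        ((Polynomial.map_ne_zero_iff PowerSeries.C_injective).mpr hG0), natDegree_pow, natDegree_X_sub_C,
        natDegree_map_eq_of_injective PowerSeries.C_injective]
      ring
    rw [hP, natDegree_sub_C, e]
  have hP0 : P ≠ 0 := by intro h; rw [h] at hdeg; simp at hdeg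
  have hPM0 : P.map ι ≠ 0 := (Polynomial.map_ne_zero_iff hι).mpr hP0
  have hq0 : q ≠ 0 := by rintro rfl; rw [Polynomial.map_zero] at hq; exact hPM0 hq.symm
  obtain ⟨hspl, hroots⟩ := roots_of_card (P.map ι) hPM0 ((insert x (insert y Z)).image ι) (by
      intro z hz
      obtain ⟨w, hw, rfl⟩ := Finset.mem_image.mp hz
      rw [eval_map_apply]
      simp only [Finset.mem_insert] at hw
      obtain rfl | rfl | hw := hw
      · rw [hx, map_zero]
      · rw [hy, map_zero]
      · rw [(hZ w hw).1, map_zero]) (by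
      rw [natDegree_map_eq_of_injective hι, hdeg, Finset.card_image_of_injective _ hι,
        Finset.card_insert_of_notMem (by simp [hxy, hxZ]), Finset.card_insert_of_notMem hyZ, hZc])
  let : Algebra K M := φ.toAlgebra
  have hqs : (q.map (algebraMap K M)).Splits := by
    change (q.map φ).Splits
    rw [hq]; exact hspl
  let j : N →ₐ[K] M := IsSplittingField.lift N q hqs
  let : Algebra N M := j.toRingHom.toAlgebra
  have : IsScalarTower K N M := IsScalarTower.of_algebraMap_eq (fun a => (j.commutes a).symm)
  have : Normal K N := Normal.of_isSplittingField q
  let σ : M ≃ₐ[K] M := AlgEquiv.ofRingEquiv (f := negEquivFrac k) hφ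
  have hσ : ∀ a, σ (ι a) = ι (PowerSeries.rescale (-1 : k) a) := negEquivFrac_algebraMap k
  let τ : N ≃ₐ[K] N := σ.restrictNormal N
  have hτ : ∀ a, algebraMap N M (τ a) = σ (algebraMap N M a) := σ.restrictNormal_commutes N
  have hinj : Function.Injective (algebraMap N M) := (algebraMap N M).injective
  have hcomp : ∀ a : N, aeval a q = 0 ↔ (P.map ι).eval (algebraMap N M a) = 0 := by
    intro a
    rw [← hq]
    change _ ↔ (q.map (algebraMap K M)).eval _ = 0
    rw [eval_map_algebraMap, aeval_algebraMap_apply, map_eq_zero_iff _ hinj]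
  have hlift : ∀ b, (P.map ι).eval b = 0 → ∃ a, algebraMap N M a = b := by
    intro b hb
    have hb' : b ∈ q.rootSet M := by
      rw [mem_rootSet]
      refine ⟨hq0, ?_⟩
      rw [← eval_map_algebraMap]
      change (q.map φ).eval b = 0
      rwa [hq]
    rw [← (IsSplittingField.splits N q).image_rootSet_algebraMap (B := M)] at hb'
    obtain ⟨a, _, ha⟩ := hb'
    exact ⟨a, ha⟩
  obtain ⟨x', hx'⟩ := hlift (ι x) (by rw [eval_map_apply, hx, map_zero])
  obtain ⟨y', hy'⟩ := hlift (ι y) (by rw [eval_map_apply, hy, map_zero])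
  refine ⟨τ, x', y', ?_, ?_, ?_, ?_, ?_, ?_⟩
  · rintro rfl
    exact hxy (hι (hx'.symm.trans hy'))
  · rw [hcomp, hx', eval_map_apply, hx, map_zero]
  · rw [hcomp, hy', eval_map_apply, hy, map_zero]
  · apply hinj; rw [hτ, hx', hy', hσ, hσx]
  · apply hinj; rw [hτ, hx', hy', hσ, hσy]
  · intro z hz hzx hzy
    obtain ⟨w, hw, hwz⟩ := Finset.mem_image.mp (hroots _ ((hcomp z).mp hz))
    simp only [Finset.mem_insert] at hw
    apply hinj
    obtain rfl | rfl | hw := hw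
    · exact absurd (hinj (hwz.symm.trans hx'.symm)) hzx
    · exact absurd (hinj (hwz.symm.trans hy'.symm)) hzy
    · rw [hτ, ← hwz, hσ, (hZ w hw).2]

/-- `K = F(A₀, …, A_{N-1})` is a rational function field. -/
structure GenField (F K : Type) [Field F] [Field K] [Algebra F K] {N : ℕ} (A : Fin N → K) :
    Prop where
  indep : AlgebraicIndependent F A
  lift : ∀ (M : Type) [Field M] [Algebra F M] (a : Fin N → M), AlgebraicIndependent F a →
    ∃ φ : K →ₐ[F] M, ∀ i, φ (A i) = a i
  gen : ∀ W : IntermediateField F K, (∀ i, A i ∈ W) → ∀ x, x ∈ W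

lemma GenField.ext {F K : Type} [Field F] [Field K] [Algebra F K] {N : ℕ} {A : Fin N → K}
    (h : GenField F K A) {M : Type} [Field M] [Algebra F M] (φ ψ : K →ₐ[F] M)
    (hA : ∀ i, φ (A i) = ψ (A i)) : φ = ψ := by
  ext x
  let W : IntermediateField F K :=
    { (AlgHom.equalizer φ ψ) with
      inv_mem' := fun x hx => by
        have : φ x = ψ x := hx
        change φ x⁻¹ = ψ x⁻¹
        rw [map_inv₀, map_inv₀, this] }
  exact h.gen W hA x

lemma exists_lift {K N Ω : Type} [Field K] [Field N] [Field Ω] [IsAlgClosed Ω] (ψ : K →+* N)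
    (ψ' : K →+* Ω) (h : ∀ z : N, ∃ p : K[X], p ≠ 0 ∧ p.eval₂ ψ z = 0) :
    ∃ Φ : N →+* Ω, ∀ x, Φ (ψ x) = ψ' x := by
  let := ψ.toAlgebra
  let := ψ'.toAlgebra
  have : Algebra.IsAlgebraic K N := ⟨fun z => by
    obtain ⟨p, hp, hz⟩ := h z
    exact ⟨p, hp, hz⟩⟩
  let Φ : N →ₐ[K] Ω := IsAlgClosed.lift
  exact ⟨Φ, Φ.commutes⟩

lemma two_transitive {F K N : Type} [Field F] [Field K] [Algebra F K] {l : ℕ}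
    {A : Fin (l + 2) → K} (h : GenField F K A) [Field N] [Algebra K N]
    [Normal K N] (f₀ : F[X]) (x y x' y' : N) (hxy : x ≠ y) (hxy' : x' ≠ y')
    (hx : aeval x (genPoly f₀ A) = 0) (hy : aeval y (genPoly f₀ A) = 0)
    (hx' : aeval x' (genPoly f₀ A) = 0) (hy' : aeval y' (genPoly f₀ A) = 0) :
    ∃ τ : N ≃ₐ[K] N, τ x = x' ∧ τ y = y' := by
  let : Algebra F N := ((algebraMap K N).comp (algebraMap F K)).toAlgebra
  have : IsScalarTower F K N := IsScalarTower.of_algebraMap_eq (fun _ => rfl)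
  let ι : K →ₐ[F] N := IsScalarTower.toAlgHom F K N
  let a : Fin (l + 2) → N := fun i => ι (A i)
  have ha : AlgebraicIndependent F a := h.indep.map' (f := ι) ι.injective
  have heval : ∀ z : N, aeval z (genPoly f₀ A) = 0 → (genPoly f₀ a).eval z = 0 := by
    intro z hz
    rw [← genPoly_map f₀ A ι, eval_map]
    exact hz
  have e : ∀ c : Fin (l + 2) → N, genPoly f₀ c = genPoly f₀ (fun j : Fin 0 => (0 : N)) + C (c 0)
      + X * C (c 1) + X ^ 2 * genPoly (0 : F[X]) (fun j => c j.succ.succ) := by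
    intro c
    rw [genPoly_cons, genPoly_cons (0 : F[X])]
    simp [genPoly]; ring
  have key : ∀ x y : N, x ≠ y → aeval x (genPoly f₀ A) = 0 → aeval y (genPoly f₀ A) = 0 →
      ∀ W : IntermediateField F N, x ∈ W → y ∈ W → (∀ j : Fin l, a j.succ.succ ∈ W) →
        ∀ i, a i ∈ W := by
    intro x y hxy hx hy W hxW hyW hj
    replace hx := heval x hx
    replace hy := heval y hy
    rw [e] at hx hy
    set p := genPoly f₀ (fun j : Fin 0 => (0 : N)) with hp
    set q := genPoly (0 : F[X]) (fun j => a j.succ.succ) with hq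
    have hpm : ∀ i, p.coeff i ∈ W := genPoly_mem _ _ (fun j => j.elim0)
    have hqm : ∀ i, q.coeff i ∈ W := genPoly_mem _ _ hj
    simp at hx hy
    have m1 := eval_mem p hpm hxW
    have m2 := eval_mem q hqm hxW
    have m3 := eval_mem p hpm hyW
    have m4 := eval_mem q hqm hyW
    have h1 : a 1 ∈ W := by
      have : a 1 = - ((p.eval x - p.eval y) + (x ^ 2 * q.eval x - y ^ 2 * q.eval y)) / (x - y) := by
        rw [eq_div_iff (sub_ne_zero.mpr hxy)]
        linear_combination hx - hy
      rw [this]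
      exact div_mem (neg_mem (add_mem (sub_mem m1 m3) (sub_mem (mul_mem (pow_mem hxW 2) m2)
        (mul_mem (pow_mem hyW 2) m4)))) (sub_mem hxW hyW)
    have h0 : a 0 ∈ W := by
      have : a 0 = - (p.eval x + x * a 1 + x ^ 2 * q.eval x) := by linear_combination hx
      rw [this]
      exact neg_mem (add_mem (add_mem m1 (mul_mem hxW h1)) (mul_mem (pow_mem hxW 2) m2))
    intro i
    exact Fin.cases h0 (fun i => Fin.cases h1 (fun i => hj i) i) i
  have ind : ∀ x y : N, x ≠ y → aeval x (genPoly f₀ A) = 0 → aeval y (genPoly f₀ A) = 0 →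
      AlgebraicIndependent F (Fin.cons x (Fin.cons y fun j => a j.succ.succ) : Fin (l + 2) → N) := by
    intro x y hxy hx hy
    exact indep_exchange ha fun W _ hb =>
      key x y hxy hx hy W (hb 0) (hb 1) (fun j => hb j.succ.succ)
  obtain ⟨ψ, hψ⟩ := h.lift N _ (ind x y hxy hx hy)
  obtain ⟨ψ', hψ'⟩ := h.lift N _ (ind x' y' hxy' hx' hy')
  let Ω := AlgebraicClosure N
  have hr : ∀ z : K, ι z ∈ ψ.fieldRange := by
    have := key x y hxy hx hy ψ.fieldRange ⟨A 0, hψ 0⟩ ⟨A 1, hψ 1⟩ (fun j => ⟨A j.succ.succ, hψ _⟩)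
    exact h.gen (ψ.fieldRange.comap ι) this
  obtain ⟨Φ, hΦ⟩ := exists_lift (ψ : K →+* N) ((algebraMap N Ω).comp (ψ' : K →+* N)) (by
    intro z
    obtain ⟨p, hp, hz⟩ := Normal.isIntegral (F := K) inferInstance z |>.isAlgebraic
    have : p.map (algebraMap K N) ∈ Polynomial.lifts (ψ : K →+* N) := by
      rw [Polynomial.lifts_iff_coeff_lifts]
      intro i
      rw [coeff_map]
      obtain ⟨w, hw⟩ := hr (p.coeff i)
      exact ⟨w, hw⟩
    obtain ⟨r, hr⟩ := (Polynomial.mem_lifts _).mp this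
    refine ⟨r, ?_, ?_⟩
    · rintro rfl
      rw [Polynomial.map_zero] at hr
      exact hp ((Polynomial.map_eq_zero (algebraMap K N)).mp hr.symm)
    · rw [← eval_map, hr, eval_map_algebraMap, hz])
  have hΦF : ∀ c : F, Φ (algebraMap F N c) = algebraMap N Ω (algebraMap F N c) := by
    intro c
    have := hΦ (algebraMap F K c)
    simpa using this
  let ΦF : N →ₐ[F] Ω := { Φ with commutes' := fun c => hΦF c }
  have hΦx : Φ x = algebraMap N Ω x' := by
    have := hΦ (A 0)
    simpa [hψ 0, hψ' 0] using this
  have hΦy : Φ y = algebraMap N Ω y' := by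
    have := hΦ (A 1)
    have e1 : ψ (A 1) = y := hψ 1
    have e2 : ψ' (A 1) = y' := hψ' 1
    simpa [e1, e2] using this
  have hΦj : ∀ j : Fin l, Φ (a j.succ.succ) = algebraMap N Ω (a j.succ.succ) := by
    intro j
    have := hΦ (A j.succ.succ)
    have e1 : ψ (A j.succ.succ) = a j.succ.succ := hψ _
    have e2 : ψ' (A j.succ.succ) = a j.succ.succ := hψ' _
    simpa [e1, e2] using this
  have hΦall : ∀ i, Φ (a i) = algebraMap N Ω (a i) := by
    have key2 : ∀ X' Y' : Ω, X' ≠ Y' → ∀ b b' : Fin (l + 2) → Ω,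
        (genPoly f₀ b).eval X' = 0 → (genPoly f₀ b).eval Y' = 0 →
        (genPoly f₀ b').eval X' = 0 → (genPoly f₀ b').eval Y' = 0 →
        (∀ j : Fin l, b j.succ.succ = b' j.succ.succ) → ∀ i, b i = b' i := by
      intro X' Y' hne b b' h1 h2 h3 h4 hj
      have e : ∀ c : Fin (l + 2) → Ω, genPoly f₀ c = genPoly f₀ (fun j : Fin 0 => (0 : Ω)) + C (c 0)
          + X * C (c 1) + X ^ 2 * genPoly (0 : F[X]) (fun j => c j.succ.succ) := by
        intro c
        rw [genPoly_cons, genPoly_cons (0 : F[X])]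
        simp [genPoly]; ring
      rw [e] at h1 h2 h3 h4
      simp only [hj] at h1 h2
      simp at h1 h2 h3 h4
      have hb1 : b 1 = b' 1 := by
        apply mul_left_cancel₀ (sub_ne_zero.mpr hne)
        linear_combination h1 - h2 - h3 + h4
      have hb0 : b 0 = b' 0 := by
        rw [hb1] at h1
        linear_combination h1 - h3
      intro i
      exact Fin.cases hb0 (fun i => Fin.cases hb1 (fun i => hj i) i) i
    have hinj := (algebraMap N Ω).injective
    let κ : N →ₐ[F] Ω := IsScalarTower.toAlgHom F N Ω
    have c1 : ∀ z, (genPoly f₀ a).eval z = 0 → (genPoly f₀ (fun i => ΦF (a i))).eval (ΦF z) = 0 := by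
      intro z hz
      rw [← genPoly_map f₀ a ΦF]
      change (map (ΦF : N →+* Ω) (genPoly f₀ a)).eval ((ΦF : N →+* Ω) z) = 0
      rw [eval_map_apply, hz, map_zero]
    have c2 : ∀ z, (genPoly f₀ a).eval z = 0 → (genPoly f₀ (fun i => κ (a i))).eval (κ z) = 0 := by
      intro z hz
      rw [← genPoly_map f₀ a κ]
      change (map (κ : N →+* Ω) (genPoly f₀ a)).eval ((κ : N →+* Ω) z) = 0
      rw [eval_map_apply, hz, map_zero]
    have d1 := c1 x (heval x hx)
    have d2 := c1 y (heval y hy)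
    rw [show ΦF x = algebraMap N Ω x' from hΦx] at d1
    rw [show ΦF y = algebraMap N Ω y' from hΦy] at d2
    exact key2 (algebraMap N Ω x') (algebraMap N Ω y') (fun h => hxy' (hinj h)) _ _ d1 d2
      (c2 x' (heval x' hx')) (c2 y' (heval y' hy')) hΦj
  have hΦK : ∀ z : K, Φ (algebraMap K N z) = algebraMap K Ω z := by
    have := h.ext (ΦF.comp ι) ((IsScalarTower.toAlgHom F N Ω).comp ι) hΦall
    intro z
    rw [IsScalarTower.algebraMap_apply K N Ω]
    exact DFunLike.congr_fun this z
  let ΦK : N →ₐ[K] Ω := { Φ with commutes' := hΦK }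
  let τ : N →ₐ[K] N := ΦK.restrictNormal N
  have hτ : ∀ z, algebraMap N Ω (τ z) = Φ z := ΦK.restrictNormal_commutes N
  refine ⟨AlgEquiv.ofBijective τ (Algebra.IsAlgebraic.algHom_bijective τ), ?_, ?_⟩
  · apply (algebraMap N Ω).injective
    exact (hτ x).trans hΦx
  · apply (algebraMap N Ω).injective
    exact (hτ y).trans hΦy


lemma exists_embedding {F K k : Type} [Field F] [Field K] [Algebra F K] {m : ℕ}
    {A : Fin (m + 1) → K} (h : GenField F K A) [Field k] [Algebra F k] (b : k) (c : Fin m → k)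
    (hc : AlgebraicIndependent F c) (f₀ : F[X]) :
    ∃ φ : K →+* FractionRing (PowerSeries k), (∀ x, negEquivFrac k (φ x) = φ x) ∧
      (genPoly f₀ A).map φ = ((genPoly f₀ (Fin.cons b c : Fin (m + 1) → k)).map
        (PowerSeries.C (R := k)) - C (PowerSeries.X ^ 2)).map (algebraMap (PowerSeries k) _) := by
  let ι : k →ₐ[F] PowerSeries k := IsScalarTower.toAlgHom F k (PowerSeries k)
  have hιC : ∀ x, ι x = PowerSeries.C x := fun x => rfl
  let κ : PowerSeries k →ₐ[F] FractionRing (PowerSeries k) :=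
    IsScalarTower.toAlgHom F (PowerSeries k) _
  have hκi : Function.Injective κ := IsFractionRing.injective (PowerSeries k) _
  let j := κ.comp ι
  let e : PowerSeries k := PowerSeries.C b - PowerSeries.X ^ 2
  have htr : Transcendental k e := by
    rw [transcendental_iff]
    intro p hp
    have he : e = Polynomial.coeToPowerSeries.algHom k (C b - X ^ 2) := by
      simp [e, Polynomial.coeToPowerSeries.algHom_apply]
    rw [he, Polynomial.aeval_algHom_apply, ← Polynomial.comp_eq_aeval] at hp
    have h0 : p.comp (C b - X ^ 2) = 0 := by
      have := hp
      rw [Polynomial.coeToPowerSeries.algHom_apply] at this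
      simpa using this
    rw [Polynomial.comp_eq_zero_iff] at h0
    rcases h0 with h0 | ⟨_, h0⟩
    · exact h0
    · exfalso
      have := congrArg (fun q => q.coeff 2) h0
      simp [coeff_X_pow, coeff_C] at this
  let a' : Fin (m + 1) → PowerSeries k := Fin.cons e (fun i => ι (c i))
  have ha' : AlgebraicIndependent F a' := by
    have h1 : AlgebraicIndependent F (fun i => ι (c i)) := hc.map' (f := ι) ι.injective
    have h2 := (h1.option_iff_transcendental e).mpr (by
      intro halg
      apply htr
      obtain ⟨p, hp, hz⟩ := halg
      have hle : Algebra.adjoin F (Set.range fun i => ι (c i)) ≤ ι.range := by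
        rw [Algebra.adjoin_le_iff]
        rintro _ ⟨i, rfl⟩
        exact ⟨c i, rfl⟩
      have hl : p.map (algebraMap _ (PowerSeries k)) ∈ Polynomial.lifts (algebraMap k (PowerSeries k)) := by
        rw [Polynomial.lifts_iff_coeff_lifts]
        intro i
        rw [coeff_map]
        exact hle (p.coeff i).2
      obtain ⟨q, hq⟩ := (Polynomial.mem_lifts _).mp hl
      refine ⟨q, ?_, ?_⟩
      · rintro rfl
        apply hp
        rw [Polynomial.map_zero] at hq
        exact (Polynomial.map_eq_zero_iff Subtype.val_injective).mp hq.symm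
      · rw [aeval_def, eval₂_eq_eval_map, hq, ← eval₂_eq_eval_map]; exact hz)
    have := h2.comp (finSuccEquiv m) (finSuccEquiv m).injective
    convert this using 1
    ext i : 1
    refine Fin.cases ?_ (fun i => ?_) i <;> simp [a']
  have ha := ha'.map' (f := κ) hκi
  obtain ⟨φ, hφ⟩ := h.lift _ _ ha
  have hg : ∀ x : PowerSeries k, negEquivFrac k (κ x) = κ (PowerSeries.rescale (-1 : k) x) :=
    negEquivFrac_algebraMap k
  have hresC : ∀ x : k, PowerSeries.rescale (-1 : k) (PowerSeries.C x) = PowerSeries.C x := by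
    intro x
    ext n
    simp [PowerSeries.coeff_rescale, PowerSeries.coeff_C]
    split_ifs with h <;> simp [h]
  refine ⟨φ, ?_, ?_⟩
  · let σ : FractionRing (PowerSeries k) →ₐ[F] FractionRing (PowerSeries k) :=
      { (negEquivFrac k : FractionRing (PowerSeries k) →+* FractionRing (PowerSeries k)) with
        commutes' := fun x => by
          have := hg (ι (algebraMap F k x))
          rw [hιC, hresC, ← hιC] at this
          simpa using this }
    have := h.ext (σ.comp φ) φ (fun i => by
      change negEquivFrac k (φ (A i)) = φ (A i)
      rw [hφ]
      refine Fin.cases ?_ (fun i => ?_) i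
      · simp [a', hg, e, hresC]
      · simp [a', hg, hιC, hresC])
    intro x
    exact DFunLike.congr_fun this x
  · rw [genPoly_map f₀ A φ]
    have e1 : (fun i => φ (A i)) = fun i => κ (a' i) := funext hφ
    rw [e1, ← genPoly_map f₀ a' κ]
    change map (algebraMap _ _) _ = _
    congr 1
    have e2 := genPoly_map f₀ (Fin.cons b c : Fin (m + 1) → k) ι
    change map PowerSeries.C _ = _ at e2
    rw [e2, genPoly_cons, genPoly_cons]
    simp [a', e, hιC]
    ring


/-- There is a transposition of the roots of `q`. -/
def HasTransp (K N : Type) [Field K] [Field N] [Algebra K N] (q : K[X]) : Prop :=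
  ∃ (τ : N ≃ₐ[K] N) (x y : N), x ≠ y ∧ aeval x q = 0 ∧ aeval y q = 0 ∧ τ x = y ∧ τ y = x ∧
    ∀ z, aeval z q = 0 → z ≠ x → z ≠ y → τ z = z

lemma transG_aux {F K N k : Type} [Field F] [Field K] [Algebra F K] {l : ℕ}
    {A : Fin (l + 3) → K} (h : GenField F K A) (h2 : (2 : F) ≠ 0) [Field k] [IsAlgClosed k]
    [Algebra F k] (B : Fin (l + 3) → k) (hB : AlgebraicIndependent F B) [Field N] [Algebra K N]
    (f₀ : F[X]) [IsSplittingField K N ((genPoly f₀ A).comp (-(X ^ 2)))] :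
    HasTransp K N ((genPoly f₀ A).comp (-(X ^ 2))) := by
  have h2k : (2 : k) ≠ 0 := by
    have := (map_ne_zero (algebraMap F k)).mpr h2
    rwa [map_ofNat] at this
  let c : Fin (l + 2) → k := fun i => B i.succ
  have hc : AlgebraicIndependent F c := hB.comp _ (Fin.succ_injective _)
  let g := genPoly f₀.divX c
  have hg : genPoly f₀ (Fin.cons (-algebraMap F k (f₀.coeff 0)) c : Fin (l + 3) → k) = X * g := by
    rw [genPoly_cons]
    simp only [g, genPoly]
    conv_lhs => rw [← divX_mul_X_add f₀]
    simp
    ring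
  obtain ⟨φ, hφ, hm⟩ := exists_embedding h (-algebraMap F k (f₀.coeff 0)) c hc f₀
  have h0 : g.eval 0 ≠ 0 := by
    obtain ⟨W, hW, hWx, hWn⟩ := exists_sep hc 0
    intro h0
    apply hWn
    have : g.eval 0 = algebraMap F k (f₀.coeff 1) + c 0 := by
      simp only [g]
      rw [genPoly_cons]
      simp [eval_map, eval₂_at_zero]
    rw [this] at h0
    rw [show c 0 = - algebraMap F k (f₀.coeff 1) by linear_combination h0]
    exact neg_mem (W.algebraMap_mem _)
  refine exists_transposition (k := k) h2k _ (-(g.comp (-(X ^ 2)))) 0 (by simpa using h0) ?_ φ hφ ?_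
  · intro z hz hz'
    simp [derivative_comp] at hz hz'
    have hz0 : z ≠ 0 := by
      rintro rfl
      simp at hz
      exact h0 hz
    refine genPoly_sep f₀.divX c hc (-(z ^ 2)) hz ?_
    rcases hz' with hz' | hz'
    · exact absurd hz' (by rw [one_add_one_eq_two]; simp [h2k, hz0])
    · exact hz'
  · rw [Polynomial.map_comp, hm, hg]
    simp [Polynomial.map_comp]
    ring

lemma transF_aux {F K N k : Type} [Field F] [Field K] [Algebra F K] {l : ℕ}
    {A : Fin (l + 3) → K} (h : GenField F K A) (h2 : (2 : F) ≠ 0) [Field k] [IsAlgClosed k]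
    [Algebra F k] (B : Fin (l + 3) → k) (hB : AlgebraicIndependent F B) [Field N] [Algebra K N]
    (f₀ : F[X]) (hmon : f₀.Monic) (hdeg : l + 3 ≤ f₀.natDegree) [IsSplittingField K N (genPoly f₀ A)] :
    HasTransp K N (genPoly f₀ A) := by
  have h2k : (2 : k) ≠ 0 := by
    have := (map_ne_zero (algebraMap F k)).mpr h2
    rwa [map_ofNat] at this
  obtain ⟨s, hs⟩ : ∃ s, s = B 0 := ⟨_, rfl⟩
  obtain ⟨a, ha⟩ : ∃ s, s = B 2 := ⟨_, rfl⟩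
  obtain ⟨r, hr⟩ : ∃ r : Fin l → k, r = fun j => B j.succ.succ.succ := ⟨_, rfl⟩
  obtain ⟨x, hx⟩ : ∃ x : Fin (l + 2) → k, x = Fin.cons s (Fin.cons a r) := ⟨_, rfl⟩
  have hxi : AlgebraicIndependent F x := by
    have := hB.comp (Fin.succAbove 1) Fin.succAbove_right_injective
    convert this using 1
    rw [hx]
    ext i : 1
    refine Fin.cases ?_ (fun i => Fin.cases ?_ (fun i => ?_) i) i
    · simp [hs]
    · simp [ha]
    · simp [hr]
  have hsepA : ∃ W : IntermediateField F k, RelClosed W ∧ s ∈ W ∧ (∀ j, r j ∈ W) ∧ a ∉ W := by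
    obtain ⟨W, hW, h1, h3⟩ := exists_sep hxi 1
    refine ⟨W, hW, ?_, ?_, ?_⟩
    · have := h1 0 (by simp); rw [hx] at this; simpa using this
    · intro j
      have := h1 j.succ.succ (by rw [← Fin.succ_zero_eq_one, Ne, Fin.succ_inj]; exact Fin.succ_ne_zero j)
      rw [hx] at this; simpa using this
    · rw [hx] at h3; simpa using h3
  have hsepS : ∃ W : IntermediateField F k, RelClosed W ∧ (∀ j, r j ∈ W) ∧ s ∉ W := by
    obtain ⟨W, hW, h1, h3⟩ := exists_sep hxi 0
    refine ⟨W, hW, ?_, ?_⟩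
    · intro j
      have := h1 j.succ.succ (Fin.succ_ne_zero _)
      rw [hx] at this; simpa using this
    · rw [hx] at h3; simpa using h3
  obtain ⟨ρ, hρ⟩ : ∃ ρ : k[X], ρ = genPoly f₀ (Fin.cons 0 (Fin.cons 0 (Fin.cons 0 r)) : Fin (l + 3) → k) :=
    ⟨_, rfl⟩
  have hρmem : ∀ W : IntermediateField F k, (∀ j, r j ∈ W) → ∀ i, ρ.coeff i ∈ W := by
    intro W hW i
    rw [hρ]
    apply genPoly_mem
    intro j
    refine Fin.cases ?_ (fun j => Fin.cases ?_ (fun j => Fin.cases ?_ (fun j => ?_) j) j) j <;>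
      simp only [Fin.cons_zero, Fin.cons_succ, zero_mem, hW]
  have hρc : ∀ b c₁ : k, genPoly f₀ (Fin.cons b (Fin.cons c₁ (Fin.cons a r)) : Fin (l + 3) → k) =
      ρ + C b + C c₁ * X + C a * X ^ 2 := by
    intro b c₁
    rw [hρ]
    simp only [genPoly_cons, Fin.cons_zero, Fin.cons_succ]
    simp only [Polynomial.map_zero, C_0]
    ring
  have hρ2 : ρ.coeff 2 = algebraMap F k (f₀.coeff 2) := by
    rw [hρ]
    simp [genPoly, Fin.sum_univ_succ, coeff_X_pow]
  have hρn : ρ.coeff f₀.natDegree = 1 := by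
    rw [hρ]
    simp only [genPoly, coeff_add, coeff_map, finsetSum_coeff, coeff_C_mul, coeff_X_pow]
    rw [Finset.sum_eq_zero (fun i _ => by rw [if_neg (by omega)]; simp)]
    simp [hmon]
  have hρn1 : ρ.coeff (f₀.natDegree + 1) = 0 := by
    rw [hρ]
    simp only [genPoly, coeff_add, coeff_map, finsetSum_coeff, coeff_C_mul, coeff_X_pow]
    rw [Finset.sum_eq_zero (fun i _ => by rw [if_neg (by omega)]; simp)]
    simp
  obtain ⟨c₁, hc₁⟩ : ∃ c₁, c₁ = -(ρ.derivative.eval s + 2 * a * s) := ⟨_, rfl⟩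
  obtain ⟨b, hb⟩ : ∃ b, b = -(ρ.eval s + c₁ * s + a * s ^ 2) := ⟨_, rfl⟩
  have hc : AlgebraicIndependent F (Fin.cons c₁ (Fin.cons a r) : Fin (l + 2) → k) := by
    refine indep_exchange hxi ?_
    intro W hW hWc
    have h1 : c₁ ∈ W := hWc 0
    have h3 : a ∈ W := hWc 1
    have h4 : ∀ j, r j ∈ W := fun j => hWc j.succ.succ
    have h5 : s ∈ W := by
      refine relClosed_root hW (ρ + C c₁ * X + C a * X ^ 2).derivative ?_ ?_ ?_
      · intro h0
        have := congrArg (fun q => q.coeff 1) h0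
        simp only [coeff_derivative, coeff_add, coeff_C_mul, coeff_X_pow, coeff_X, hρ2] at this
        norm_num at this
        obtain ⟨W', -, -, -, hn⟩ := hsepA
        apply hn
        have h6 : algebraMap F k (f₀.coeff 2) + a = 0 := by
          rcases this with h | h
          · exact h
          · exact absurd h (by intro h; apply h2k; linear_combination h)
        rw [show a = -algebraMap F k (f₀.coeff 2) by linear_combination h6]
        exact neg_mem (W'.algebraMap_mem _)
      · apply deriv_mem
        intro i
        simp only [coeff_add, coeff_C_mul, coeff_X_pow, coeff_X]
        refine add_mem (add_mem (hρmem W h4 i) (mul_mem h1 ?_)) (mul_mem h3 ?_) <;>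
        · split_ifs
          · exact one_mem _
          · exact zero_mem _
      · simp [hc₁]; ring
    intro i
    rw [hx]
    refine Fin.cases ?_ (fun i => Fin.cases ?_ (fun i => ?_) i) i <;> simp [h3, h4, h5]
  obtain ⟨φ, hφ, hm⟩ := exists_embedding h b _ hc f₀
  rw [hρc] at hm
  set H := ρ + C b + C c₁ * X + C a * X ^ 2 with hH
  have hH0 : H.eval s = 0 := by
    rw [hH]; simp [hb]; ring
  have hH1 : H.derivative.eval s = 0 := by
    rw [hH]; simp [hc₁]; ring
  obtain ⟨G, hG⟩ : ∃ G, H = (X - C s) ^ 2 * G := by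
    obtain ⟨G₁, hG₁⟩ := dvd_iff_isRoot.mpr hH0
    rw [hG₁] at hH1
    have : G₁.eval s = 0 := by simpa using hH1
    obtain ⟨G, hG⟩ := dvd_iff_isRoot.mpr this
    exact ⟨G, by rw [hG₁, hG]; ring⟩
  have hGs : G.eval s ≠ 0 := by
    intro h0
    obtain ⟨W, hW, hsW, hrW, hn⟩ := hsepA
    have h3 : H.derivative.derivative.eval s = 0 := by
      rw [hG, sq]; simp [h0]
    rw [hH] at h3
    simp at h3
    apply hn
    have h4 : a = -(ρ.derivative.derivative.eval s / (algebraMap F k 2)) := by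
      rw [map_ofNat]; field_simp; linear_combination h3
    rw [h4]
    exact neg_mem (div_mem (eval_mem _ (deriv_mem _ (deriv_mem _ (hρmem W hrW))) hsW) (W.algebraMap_mem _))
  refine exists_transposition (k := k) h2k _ G s hGs ?_ φ hφ ?_
  · intro z hz hz'
    obtain ⟨W, hW, hsW, hrW, hn⟩ := hsepA
    have hz0 : H.eval z = 0 := by rw [hG]; simp [hz]
    have hz1 : H.derivative.eval z = 0 := by rw [hG]; simp [hz, hz']
    have hzs : z ≠ s := by
      rintro rfl
      exact hGs hz
    rw [hH] at hz0 hz1 hH0 hH1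
    simp at hz0 hz1 hH0 hH1
    have hzW : z ∈ W := by
      refine relClosed_root hW (C (algebraMap F k 2) * (ρ - C (ρ.eval s)) -
        (X * ρ.derivative + X * C (ρ.derivative.eval s) -
          C s * (ρ.derivative + C (ρ.derivative.eval s)))) ?_ ?_ ?_
      · intro h0
        have hco : ∀ i, 2 * ρ.coeff (i + 2) - (ρ.coeff (i + 2) * (i + 2) -
            s * (ρ.coeff (i + 3) * (i + 3))) = 0 := by
          intro i
          have := congrArg (fun q => q.coeff (i + 2)) h0
          simp only [coeff_sub, coeff_add, coeff_C_mul, coeff_X_mul, coeff_derivative, coeff_C_succ,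
            coeff_zero] at this
          rw [map_ofNat] at this
          push_cast at this
          linear_combination this
        obtain ⟨d, hd⟩ := Nat.exists_eq_add_of_le hdeg
        have e1 := hco (l + d + 1)
        have e2 := hco (l + d)
        rw [show l + d + 1 + 2 = f₀.natDegree by omega, show l + d + 1 + 3 = f₀.natDegree + 1 by omega,
          hρn, hρn1] at e1
        rw [show l + d + 3 = f₀.natDegree by omega, hρn] at e2
        push_cast at e1 e2
        obtain ⟨W', hW', hr', hs'⟩ := hsepS
        apply hs'
        have e3 : s = -(ρ.coeff (l + d + 2) / algebraMap F k 2) := by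
          rw [map_ofNat]
          field_simp
          linear_combination e2 + (s - ρ.coeff (l + d + 2)) * e1
        rw [e3]
        exact neg_mem (div_mem (hρmem W' hr' _) (W'.algebraMap_mem _))
      · intro i
        have hC : ∀ c ∈ W, ∀ i, (C c).coeff i ∈ W := by
          intro c hc i
          rw [coeff_C]; split_ifs
          · exact hc
          · exact zero_mem _
        have hX : ∀ p : k[X], (∀ i, p.coeff i ∈ W) → ∀ i, (X * p).coeff i ∈ W := by
          intro p hp i
          cases i with
          | zero => simp
          | succ i => rw [coeff_X_mul]; exact hp i
        have h1 := eval_mem _ (hρmem W hrW) hsW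
        have h3 := deriv_mem _ (hρmem W hrW)
        have h4 := eval_mem _ h3 hsW
        simp only [coeff_sub, coeff_C_mul, coeff_add]
        exact sub_mem (mul_mem (W.algebraMap_mem _) (sub_mem (hρmem W hrW _) (hC _ h1 _)))
          (sub_mem (add_mem (hX _ h3 _) (hX _ (hC _ h4) _))
            (mul_mem hsW (add_mem (h3 _) (hC _ h4 _))))
      · simp
        rw [map_ofNat]
        linear_combination 2 * hz0 - 2 * hH0 - (z - s) * (hz1 + hH1)
    apply hn
    have h4 : a = -((ρ.derivative.eval z - ρ.derivative.eval s) / (algebraMap F k 2 * (z - s))) := by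
      have : z - s ≠ 0 := sub_ne_zero.mpr hzs
      rw [map_ofNat]; field_simp
      linear_combination hz1 - hH1
    have h3 := deriv_mem _ (hρmem W hrW)
    rw [h4]
    exact neg_mem (div_mem (sub_mem (eval_mem _ h3 hzW) (eval_mem _ h3 hsW))
      (mul_mem (W.algebraMap_mem _) (sub_mem hzW hsW)))
  · rw [hm, hG]
    simp

lemma transG {F K N : Type} [Field F] [Field K] [Algebra F K] {l : ℕ}
    {A : Fin (l + 3) → K} (h : GenField F K A) (h2 : (2 : F) ≠ 0) [Field N] [Algebra K N]
    (f₀ : F[X]) [IsSplittingField K N ((genPoly f₀ A).comp (-(X ^ 2)))] :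
    HasTransp K N ((genPoly f₀ A).comp (-(X ^ 2))) :=
  transG_aux (k := AlgebraicClosure K) h h2 (fun i => IsScalarTower.toAlgHom F K _ (A i))
    (h.indep.map' (f := IsScalarTower.toAlgHom F K (AlgebraicClosure K))
      (algebraMap K (AlgebraicClosure K)).injective) f₀

lemma transF {F K N : Type} [Field F] [Field K] [Algebra F K] {l : ℕ}
    {A : Fin (l + 3) → K} (h : GenField F K A) (h2 : (2 : F) ≠ 0) [Field N] [Algebra K N]
    (f₀ : F[X]) (hmon : f₀.Monic) (hdeg : l + 3 ≤ f₀.natDegree) [IsSplittingField K N (genPoly f₀ A)] :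
    HasTransp K N (genPoly f₀ A) :=
  transF_aux (k := AlgebraicClosure K) h h2 (fun i => IsScalarTower.toAlgHom F K _ (A i))
    (h.indep.map' (f := IsScalarTower.toAlgHom F K (AlgebraicClosure K))
      (algebraMap K (AlgebraicClosure K)).injective) f₀ hmon hdeg


/-- The type of roots. -/
abbrev RootsIn {K : Type} (N : Type) [Field K] [Field N] [Algebra K N] (f : K[X]) : Type :=
  {x : N // aeval x f = 0}

lemma rootsIn_finite {K N : Type} [Field K] [Field N] [Algebra K N] (f : K[X]) (hf : f ≠ 0) :
    Finite (RootsIn N f) := by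
  have : (fun x : N => aeval x f = 0) = fun x => x ∈ f.rootSet N := by
    ext x; rw [mem_rootSet_of_ne hf]
  unfold RootsIn
  rw [this]
  exact Set.Finite.to_subtype (rootSet_finite f N)

lemma rootsIn_card {K N : Type} [Field K] [Field N] [Algebra K N] (f : K[X]) (hf : f ≠ 0)
    (hs : f.Separable) (hsp : (f.map (algebraMap K N)).Splits) :
    Nat.card (RootsIn N f) = f.natDegree := by
  have : (fun x : N => aeval x f = 0) = fun x => x ∈ f.rootSet N := by
    ext x; rw [mem_rootSet_of_ne hf]
  unfold RootsIn
  rw [this, ← card_rootSet_eq_natDegree hs hsp, ← Nat.card_eq_fintype_card]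

/-- The action on the roots. -/
def rootHom {K N : Type} [Field K] [Field N] [Algebra K N] (f : K[X]) :
    (N ≃ₐ[K] N) →* Equiv.Perm (RootsIn N f) where
  toFun σ :=
    { toFun := fun x => ⟨σ x.1, by
        have := Polynomial.aeval_algHom_apply (σ : N →ₐ[K] N) x.1 f
        rw [x.2, map_zero] at this; exact this⟩
      invFun := fun x => ⟨σ.symm x.1, by
        have := Polynomial.aeval_algHom_apply (σ.symm : N →ₐ[K] N) x.1 f
        rw [x.2, map_zero] at this; exact this⟩
      left_inv := fun x => by simp
      right_inv := fun x => by simp }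
  map_one' := by ext; rfl
  map_mul' σ τ := by ext; rfl

@[simp] lemma rootHom_apply {K N : Type} [Field K] [Field N] [Algebra K N] (f : K[X])
    (σ : N ≃ₐ[K] N) (x : RootsIn N f) : (rootHom f σ x : N) = σ x := rfl

lemma rootHom_surj {K N : Type} [Field K] [Field N] [Algebra K N] (f : K[X]) (hf : f ≠ 0)
    (ht : HasTransp K N f)
    (h2 : ∀ x y x' y' : N, x ≠ y → x' ≠ y' → aeval x f = 0 → aeval y f = 0 → aeval x' f = 0 →
      aeval y' f = 0 → ∃ τ : N ≃ₐ[K] N, τ x = x' ∧ τ y = y') :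
    Function.Surjective (rootHom (N := N) f) := by
  classical
  have := rootsIn_finite (N := N) f hf
  rw [← MonoidHom.range_eq_top, eq_top_iff, ← Equiv.Perm.closure_isSwap, Subgroup.closure_le]
  rintro _ ⟨x, y, hxy, rfl⟩
  obtain ⟨τ, x₀, y₀, hne, hx₀, hy₀, hτx, hτy, hτ⟩ := ht
  obtain ⟨ρ, hρx, hρy⟩ := h2 x₀ y₀ x y hne (fun h => hxy (Subtype.ext h)) hx₀ hy₀ x.2 y.2
  refine ⟨ρ * τ * ρ⁻¹, ?_⟩
  ext z
  have hx' : ρ⁻¹ x = x₀ := by rw [← hρx]; exact ρ.symm_apply_apply x₀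
  have hy' : ρ⁻¹ y = y₀ := by rw [← hρy]; exact ρ.symm_apply_apply y₀
  have hρρ : ∀ z, ρ (ρ⁻¹ z) = z := fun z => ρ.apply_symm_apply z
  simp only [rootHom_apply, AlgEquiv.mul_apply]
  by_cases h1 : z = x
  · subst h1; rw [Equiv.swap_apply_left, hx', hτx, hρy]
  by_cases h3 : z = y
  · subst h3; rw [Equiv.swap_apply_right, hy', hτy, hρx]
  rw [Equiv.swap_apply_of_ne_of_ne h1 h3, hτ, hρρ]
  · exact (rootHom f ρ⁻¹ z).2
  · intro h; apply h1; apply Subtype.ext; rw [← hρρ z, h, hρx]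
  · intro h; apply h3; apply Subtype.ext; rw [← hρρ z, h, hρy]

lemma alg_ext {K N : Type} [Field K] [Field N] [Algebra K N] (f : K[X]) (hf : f ≠ 0)
    [IsSplittingField K N f] (σ τ : N ≃ₐ[K] N) (h : ∀ x, aeval x f = 0 → σ x = τ x) : σ = τ := by
  have := AlgHom.ext_of_adjoin_eq_top (IsSplittingField.adjoin_rootSet N f)
    (φ₁ := (σ : N →ₐ[K] N)) (φ₂ := (τ : N →ₐ[K] N)) (fun x hx => h x ((mem_rootSet_of_ne hf).mp hx))
  ext x
  exact DFunLike.congr_fun this x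

lemma part1 {K N : Type} [Field K] [Field N] [Algebra K N] (f : K[X]) (hf : f ≠ 0)
    [IsSplittingField K N f] (hs : f.Separable)
    (ht : HasTransp K N f)
    (h2 : ∀ x y x' y' : N, x ≠ y → x' ≠ y' → aeval x f = 0 → aeval y f = 0 → aeval x' f = 0 →
      aeval y' f = 0 → ∃ τ : N ≃ₐ[K] N, τ x = x' ∧ τ y = y') :
    Nonempty ((N ≃ₐ[K] N) ≃* Equiv.Perm (Fin f.natDegree)) := by
  have := rootsIn_finite (N := N) f hf
  have hinj : Function.Injective (rootHom (N := N) f) := by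
    intro σ τ h
    refine alg_ext f hf σ τ fun x hx => ?_
    have := congrArg (fun π => (π ⟨x, hx⟩ : RootsIn N f).1) h
    simpa using this
  have e := Finite.equivFinOfCardEq (rootsIn_card f hf hs (IsSplittingField.splits N f))
  exact ⟨(MulEquiv.ofBijective _ ⟨hinj, rootHom_surj f hf ht h2⟩).trans (Equiv.permCongrHom e)⟩

lemma hasTransp_lift {K L N : Type} [Field K] [Field L] [Field N] [Algebra K N] [Algebra K L] (f : K[X])
    (hf : f ≠ 0) [IsSplittingField K L f] [Normal K N] (hs : (f.map (algebraMap K N)).Splits)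
    (ht : HasTransp K L f) : HasTransp K N f := by
  let j : L →ₐ[K] N := IsSplittingField.lift L f hs
  let : Algebra L N := j.toRingHom.toAlgebra
  have : IsScalarTower K L N := IsScalarTower.of_algebraMap_eq fun x => (j.commutes x).symm
  have hj : ∀ x, algebraMap L N x = j x := fun x => rfl
  obtain ⟨τ, x, y, hxy, hx, hy, hτx, hτy, hτ⟩ := ht
  have hl : ∀ z, τ.liftNormal N (j z) = j (τ z) := fun z => τ.liftNormal_commutes N z
  refine ⟨τ.liftNormal N, j x, j y, fun h => hxy (j.injective h), ?_, ?_, ?_, ?_, ?_⟩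
  · rw [aeval_algHom_apply, hx, map_zero]
  · rw [aeval_algHom_apply, hy, map_zero]
  · rw [hl, hτx]
  · rw [hl, hτy]
  · intro z hz hzx hzy
    have : z ∈ j '' f.rootSet L := by
      rw [(IsSplittingField.splits L f).image_rootSet j, mem_rootSet_of_ne hf]; exact hz
    obtain ⟨w, hw, rfl⟩ := this
    rw [mem_rootSet_of_ne hf] at hw
    rw [hl, hτ w hw (fun h => hzx (by rw [h])) (fun h => hzy (by rw [h]))]

lemma splits_of_comp {K N : Type} [Field K] [Field N] [Algebra K N] (f : K[X])
    [IsSplittingField K N (f.comp (-(X ^ 2)))] : (f.map (algebraMap K N)).Splits := by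
  have h := Polynomial.Gal.splits_in_splittingField_of_comp f (-(X ^ 2)) (by simp)
  let e := (IsSplittingField.algEquiv N (f.comp (-(X ^ 2)))).symm
  have := h.map (e : SplittingField (f.comp (-(X ^ 2))) →+* N)
  rw [Polynomial.map_map] at this
  convert this using 2
  ext x
  exact (e.commutes x).symm

lemma aeval_comp_neg {K N : Type} [Field K] [Field N] [Algebra K N] (f : K[X]) (x : N) :
    aeval x (f.comp (-(X ^ 2))) = aeval (-(x ^ 2)) f := by
  rw [aeval_comp]; simp

lemma part2 {K N : Type} [Field K] [Field N] [Algebra K N] (f : K[X]) (hf : f.Monic)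
    (h2N : (2 : N) ≠ 0)
    [IsSplittingField K N (f.comp (-(X ^ 2)))] (hs : f.Separable) (h0 : aeval (0 : N) f ≠ 0)
    (ht : HasTransp K N f) (htg : HasTransp K N (f.comp (-(X ^ 2))))
    (h2 : ∀ x y x' y' : N, x ≠ y → x' ≠ y' → aeval x f = 0 → aeval y f = 0 → aeval x' f = 0 →
      aeval y' f = 0 → ∃ τ : N ≃ₐ[K] N, τ x = x' ∧ τ y = y') :
    Nat.card (N ≃ₐ[K] N) = 2 ^ f.natDegree * f.natDegree.factorial := by
  classical
  have hf0 := hf.ne_zero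
  have hg0 : f.comp (-(X ^ 2)) ≠ 0 := by
    rw [Ne, comp_eq_zero_iff]
    rintro (h | ⟨_, h⟩)
    · exact hf0 h
    · have := congrArg (fun q => q.coeff 2) h
      simp [coeff_X_pow] at this
  have := rootsIn_finite (N := N) f hf0
  have hcard := rootsIn_card (N := N) f hf0 hs (splits_of_comp f)
  have hsurj := rootHom_surj f hf0 ht h2
  have hβ : ∀ x : RootsIn N f, ∃ β : N, -(β ^ 2) = x := by
    intro x
    have hd : (X - C x.1) ∣ f.map (algebraMap K N) := by
      rw [dvd_iff_isRoot, IsRoot, eval_map_algebraMap]; exact x.2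
    obtain ⟨q, hq⟩ := hd
    have hd' : (-(X ^ 2) - C x.1) ∣ (f.comp (-(X ^ 2))).map (algebraMap K N) := by
      rw [Polynomial.map_comp, hq]
      refine ⟨q.comp (-(X ^ 2)), ?_⟩
      simp
    have hsp := (IsSplittingField.splits N (f.comp (-(X ^ 2)))).of_dvd
      ((Polynomial.map_ne_zero_iff (algebraMap K N).injective).mpr hg0) hd'
    obtain ⟨β, hβ⟩ := hsp.exists_eval_eq_zero (by
      rw [show (-(X ^ 2) - C x.1 : N[X]) = -(X ^ 2 + C x.1) by ring, degree_neg,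
        degree_X_pow_add_C (by norm_num)]
      norm_num)
    refine ⟨β, ?_⟩
    simp at hβ
    linear_combination hβ
  choose β hβ using hβ
  have hroot : ∀ x, aeval (β x) (f.comp (-(X ^ 2))) = 0 := by
    intro x; rw [aeval_comp_neg, hβ]; exact x.2
  have hne0 : ∀ b : N, aeval b (f.comp (-(X ^ 2))) = 0 → b ≠ 0 := by
    rintro b hb rfl
    rw [aeval_comp_neg] at hb
    apply h0; simpa using hb
  have hneg : ∀ b : N, b ≠ 0 → -b ≠ b := by
    intro b hb h
    have : 2 * b = 0 := by linear_combination -h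
    exact (mul_ne_zero h2N hb) this
  have hpm : ∀ a b : N, -(a ^ 2) = -(b ^ 2) → a = b ∨ a = -b := by
    intro a b h
    exact sq_eq_sq_iff_eq_or_eq_neg.mp (neg_injective h)
  have hflip : ∀ a, ∃ ε : N ≃ₐ[K] N, ε (β a) = -β a ∧ ∀ x, x ≠ a → ε (β x) = β x := by
    obtain ⟨τ, b, b', hbb, hb, hb', hτb, hτb', hτ⟩ := htg
    have hbn : aeval (-b) (f.comp (-(X ^ 2))) = 0 := by
      rw [aeval_comp_neg] at hb ⊢
      rw [neg_sq]; exact hb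
    have hbe : b' = -b := by
      by_contra hne
      have := hτ (-b) hbn (hneg b (hne0 b hb)) (fun h => hne h.symm)
      rw [map_neg, hτb] at this
      exact hbb (neg_injective this).symm
    subst hbe
    intro a
    have hα : aeval (-(b ^ 2)) f = 0 := by rw [← aeval_comp_neg]; exact hb
    obtain ⟨ρ, hρ⟩ : ∃ ρ : N ≃ₐ[K] N, ρ (-(b ^ 2)) = a := by
      by_cases h : -(b ^ 2) = a.1
      · exact ⟨1, h⟩
      · obtain ⟨ρ, h1, -⟩ := h2 _ _ _ _ h (Ne.symm h) hα a.2 a.2 hα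
        exact ⟨ρ, h1⟩
    have hρρ : ∀ z, ρ (ρ⁻¹ z) = z := fun z => ρ.apply_symm_apply z
    refine ⟨ρ * τ * ρ⁻¹, ?_, ?_⟩
    · simp only [AlgEquiv.mul_apply]
      have : ρ⁻¹ (β a) = b ∨ ρ⁻¹ (β a) = -b := by
        apply hpm
        apply ρ.injective
        rw [hρ, map_neg, map_pow, hρρ, hβ]
      rcases this with h | h
      · rw [h, hτb, map_neg, ← h, hρρ]
      · rw [h, hτb', ← neg_neg b, ← h, map_neg, hρρ]
    · intro x hx
      simp only [AlgEquiv.mul_apply]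
      have hxn : ∀ c, c ^ 2 = b ^ 2 → ρ⁻¹ (β x) ≠ c := by
        rintro c hc rfl
        apply hx
        apply Subtype.ext
        rw [← hρ, ← hc, ← hβ x, map_neg, map_pow, hρρ]
      rw [hτ _ _ (hxn b rfl) (hxn _ (neg_sq b)), hρρ]
      exact (rootHom (f.comp (-(X ^ 2))) ρ⁻¹ ⟨β x, hroot x⟩).2
  have hall : ∀ S : Finset (RootsIn N f), ∃ ε : N ≃ₐ[K] N, ∀ x, ε (β x) = if x ∈ S then -β x else β x := by
    intro S
    induction S using Finset.induction_on with
    | empty => exact ⟨1, fun x => by simp⟩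
    | insert a S ha ih =>
      obtain ⟨ε, hε⟩ := ih
      obtain ⟨δ, hδa, hδ⟩ := hflip a
      refine ⟨δ * ε, fun x => ?_⟩
      rw [AlgEquiv.mul_apply, hε]
      by_cases hxa : x = a
      · subst hxa; simp [ha, hδa]
      · by_cases hxS : x ∈ S <;> simp [hxa, hxS, hδ x hxa]
  have := Fintype.ofFinite (RootsIn N f)
  have hmemker : ∀ σ : N ≃ₐ[K] N, σ ∈ (rootHom (N := N) f).ker ↔ ∀ x : RootsIn N f, σ x = x := by
    intro σ
    rw [MonoidHom.mem_ker]
    constructor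
    · intro h x
      rw [← rootHom_apply, h]; rfl
    · intro h; ext x; exact h x
  let Θ : (rootHom (N := N) f).ker → Finset (RootsIn N f) :=
    fun σ => Finset.univ.filter fun x => σ.1 (β x) = -β x
  have hsgn : ∀ σ : (rootHom (N := N) f).ker, ∀ x, σ.1 (β x) = β x ∨ σ.1 (β x) = -β x := by
    intro σ x
    apply hpm
    rw [← map_pow, ← map_neg, hβ, (hmemker σ.1).mp σ.2]
  have hΘ : Function.Bijective Θ := by
    constructor
    · intro σ τ h
      have hx : ∀ x, σ.1 (β x) = τ.1 (β x) := by
        intro x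
        have hiff : σ.1 (β x) = -β x ↔ τ.1 (β x) = -β x := by
          have := congrArg (fun S => x ∈ S) h
          simpa [Θ] using this
        by_cases hs' : σ.1 (β x) = -β x
        · rw [hs', hiff.mp hs']
        · rw [(hsgn σ x).resolve_right hs', (hsgn τ x).resolve_right (fun h => hs' (hiff.mpr h))]
      apply Subtype.ext
      refine alg_ext _ hg0 _ _ fun b hb => ?_
      have hb' : aeval (-(b ^ 2)) f = 0 := by rw [← aeval_comp_neg]; exact hb
      rcases hpm b (β ⟨_, hb'⟩) (hβ ⟨_, hb'⟩).symm with h | h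
      · rw [h, hx]
      · rw [h, map_neg, map_neg, hx]
    · intro S
      obtain ⟨ε, hε⟩ := hall S
      have hk : ε ∈ (rootHom (N := N) f).ker := by
        rw [hmemker]
        intro x
        rw [← hβ x, map_neg, map_pow, hε]
        split_ifs <;> ring
      refine ⟨⟨ε, hk⟩, ?_⟩
      ext x
      simp only [Θ, Finset.mem_filter, Finset.mem_univ, true_and, hε]
      split_ifs with h
      · simp [h]
      · simp only [h, iff_false]
        exact (hneg _ (hne0 _ (hroot x))).symm
  rw [← Subgroup.card_mul_index (rootHom (N := N) f).ker, Subgroup.index_ker,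
    MonoidHom.range_eq_top.mpr hsurj, Nat.card_eq_of_bijective Θ hΘ]
  congr 1
  · rw [Nat.card_eq_fintype_card, Fintype.card_finset, ← Nat.card_eq_fintype_card, hcard]
  · rw [Nat.card_congr (Subgroup.topEquiv).toEquiv, Nat.card_perm, hcard]


lemma genField_of_frac {F K : Type} [Field F] [Field K] [Algebra F K] {N : ℕ}
    [Algebra (MvPolynomial (Fin N) F) K] [IsFractionRing (MvPolynomial (Fin N) F) K]
    [IsScalarTower F (MvPolynomial (Fin N) F) K] :
    GenField F K (fun i : Fin N => algebraMap (MvPolynomial (Fin N) F) K (MvPolynomial.X i)) where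
  indep := by
    have := (MvPolynomial.algebraicIndependent_X (Fin N) F).map'
      (f := IsScalarTower.toAlgHom F (MvPolynomial (Fin N) F) K)
      (IsFractionRing.injective (MvPolynomial (Fin N) F) K)
    exact this
  lift := by
    intro M _ _ a ha
    have ha' : Function.Injective (MvPolynomial.aeval (R := F) a) := ha
    refine ⟨IsFractionRing.liftAlgHom (K := K) (g := MvPolynomial.aeval a) ha', fun i => ?_⟩
    rw [IsFractionRing.liftAlgHom_apply, IsFractionRing.lift_algebraMap]
    simp
  gen := by
    intro W hW x
    have hp : ∀ p : MvPolynomial (Fin N) F, algebraMap _ K p ∈ W := by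
      intro p
      induction p using MvPolynomial.induction_on with
      | C a =>
        have : algebraMap (MvPolynomial (Fin N) F) K (MvPolynomial.C a) = algebraMap F K a := by
          rw [IsScalarTower.algebraMap_apply F (MvPolynomial (Fin N) F) K]; rfl
        rw [this]; exact W.algebraMap_mem a
      | add p q hp hq => rw [map_add]; exact add_mem hp hq
      | mul_X p i hp => rw [map_mul]; exact mul_mem hp (hW i)
    obtain ⟨p, q, -, rfl⟩ := IsFractionRing.div_surjective (A := MvPolynomial (Fin N) F) x
    exact div_mem (hp p) (hp q)

lemma genPoly_separable {F K : Type} [Field F] [Field K] [Algebra F K] {l : ℕ}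
    {A : Fin (l + 2) → K} (h : AlgebraicIndependent F A) (f₀ : F[X]) : (genPoly f₀ A).Separable := by
  unfold Polynomial.Separable
  rw [isCoprime_iff_aeval_ne_zero_of_isAlgClosed K (AlgebraicClosure K)]
  intro a
  by_contra hcon
  push Not at hcon
  obtain ⟨h1, h3⟩ := hcon
  have hB := h.map' (f := IsScalarTower.toAlgHom F K (AlgebraicClosure K))
    (algebraMap K (AlgebraicClosure K)).injective
  have hm := genPoly_map f₀ A (IsScalarTower.toAlgHom F K (AlgebraicClosure K))
  have hm' : (genPoly f₀ A).map (algebraMap K (AlgebraicClosure K)) =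
    genPoly f₀ (fun i => IsScalarTower.toAlgHom F K (AlgebraicClosure K) (A i)) := hm
  refine genPoly_sep f₀ _ hB a ?_ ?_
  · change eval a (genPoly f₀ (fun i => IsScalarTower.toAlgHom F K (AlgebraicClosure K) (A i))) = 0
    rw [← hm', eval_map_algebraMap]; exact h1
  · change eval a (derivative (genPoly f₀ (fun i => IsScalarTower.toAlgHom F K (AlgebraicClosure K) (A i)))) = 0
    rw [← hm', derivative_map, eval_map_algebraMap]; exact h3

lemma genPoly_monic {F K : Type} [Field F] [Field K] [Algebra F K] {N : ℕ}
    (A : Fin N → K) (f₀ : F[X]) (hf : f₀.Monic) (hd : N ≤ f₀.natDegree) :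
    (genPoly f₀ A).Monic ∧ (genPoly f₀ A).natDegree = f₀.natDegree := by
  have hdeg : (∑ i, C (A i) * X ^ (i : ℕ)).degree < (f₀.map (algebraMap F K)).degree := by
    rw [degree_map, degree_eq_natDegree hf.ne_zero]
    refine lt_of_le_of_lt (degree_sum_le _ _) ?_
    rw [Finset.sup_lt_iff (by exact WithBot.bot_lt_coe _)]
    intro i _
    refine lt_of_le_of_lt (degree_C_mul_X_pow_le _ _) ?_
    exact_mod_cast lt_of_lt_of_le i.2 hd
  refine ⟨(hf.map _).add_of_left hdeg, ?_⟩
  unfold genPoly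
  rw [natDegree_add_eq_left_of_degree_lt hdeg, natDegree_map]

lemma genPoly_zero_ne {F K N : Type} [Field F] [Field K] [Algebra F K] {l : ℕ}
    {A : Fin (l + 1) → K} (h : AlgebraicIndependent F A) (f₀ : F[X]) [Field N] [Algebra K N] :
    aeval (0 : N) (genPoly f₀ A) ≠ 0 := by
  intro h0
  obtain ⟨W, -, -, hn⟩ := exists_sep h 0
  apply hn
  rw [← coeff_zero_eq_aeval_zero', map_eq_zero, genPoly_cons] at h0
  simp at h0
  rw [show A 0 = -algebraMap F K (f₀.coeff 0) by linear_combination h0]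
  exact neg_mem (W.algebraMap_mem _)

/-- **The generic Galois group.** Let `char F ≠ 2`, `n > m ≥ 2`, `f₀ ∈ F[T]` monic of
degree `n`, `K = F(A₀,…,A_m)` and `f = f₀ + ∑ Aᵢ Tⁱ ∈ K[T]`. Then `Gal(f|K) ≅ S_n` and
the Galois group of `f(-T²)` over `K` has order `2ⁿ·n!`. -/
theorem generic_galois_group
    (F : Type) [Field F] (hchar : ringChar F ≠ 2)
    (n m : ℕ) (hm : 2 ≤ m) (hmn : m < n)
    (f₀ : Polynomial F) (hmon : f₀.Monic) (hdeg : f₀.natDegree = n) :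
    ∀ (K : Type) [Field K] [Algebra (MvPolynomial (Fin (m + 1)) F) K]
      [IsFractionRing (MvPolynomial (Fin (m + 1)) F) K],
    ∀ f : Polynomial K,
      f = (f₀.map ((algebraMap (MvPolynomial (Fin (m + 1)) F) K).comp
            (MvPolynomial.C : F →+* MvPolynomial (Fin (m + 1)) F))) +
          ∑ i : Fin (m + 1),
            Polynomial.C (algebraMap (MvPolynomial (Fin (m + 1)) F) K
              (MvPolynomial.X i)) * Polynomial.X ^ (i : ℕ) →
      (∀ (L : Type) [Field L] [Algebra K L], Polynomial.IsSplittingField K L f →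
        Nonempty ((L ≃ₐ[K] L) ≃* Equiv.Perm (Fin n))) ∧
      (∀ (M : Type) [Field M] [Algebra K M],
        Polynomial.IsSplittingField K M (f.comp (-(Polynomial.X ^ 2))) →
        Nat.card (M ≃ₐ[K] M) = 2 ^ n * Nat.factorial n) := by
  intro K _ _ _ f hf
  obtain ⟨l, rfl⟩ := Nat.exists_eq_add_of_le' hm
  let : Algebra F K := ((algebraMap (MvPolynomial (Fin (l + 2 + 1)) F) K).comp
            (MvPolynomial.C : F →+* MvPolynomial (Fin (l + 2 + 1)) F)).toAlgebra
  have : IsScalarTower F (MvPolynomial (Fin (l + 2 + 1)) F) K :=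
    IsScalarTower.of_algebraMap_eq fun x => rfl
  have h2F : (2 : F) ≠ 0 := Ring.two_ne_zero hchar
  have hG : GenField F K (fun i : Fin (l + 3) =>
    algebraMap (MvPolynomial (Fin (l + 3)) F) K (MvPolynomial.X i)) := genField_of_frac
  obtain ⟨A, hA⟩ : ∃ A : Fin (l + 3) → K, A = fun i : Fin (l + 3) =>
    algebraMap (MvPolynomial (Fin (l + 3)) F) K (MvPolynomial.X i) := ⟨_, rfl⟩
  rw [← hA] at hG
  have hfg : f = genPoly f₀ A := by rw [hf, hA]; rfl
  have hdeg' : l + 3 ≤ f₀.natDegree := by omega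
  obtain ⟨hmonf, hdegf⟩ := genPoly_monic A f₀ hmon hdeg'
  have hsep := genPoly_separable hG.indep f₀
  rw [hfg]
  rw [hdeg] at hdegf
  rw [← hdegf]
  constructor
  · intro L _ _ hL
    have := Normal.of_isSplittingField (F := K) (E := L) (genPoly f₀ A)
    exact part1 _ hmonf.ne_zero hsep (transF hG h2F f₀ hmon hdeg')
      (fun x y x' y' h h' hx hy hx' hy' => two_transitive hG f₀ x y x' y' h h' hx hy hx' hy')
  · intro M _ _ hM
    have := Normal.of_isSplittingField (F := K) (E := M) ((genPoly f₀ A).comp (-(X ^ 2)))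
    have h2M : (2 : M) ≠ 0 := by
      have := (map_ne_zero ((algebraMap K M).comp (algebraMap F K))).mpr h2F
      rwa [map_ofNat] at this
    exact part2 _ hmonf h2M hsep (genPoly_zero_ne hG.indep f₀)
      (hasTransp_lift (L := (genPoly f₀ A).SplittingField) _ hmonf.ne_zero (splits_of_comp _)
        (transF hG h2F f₀ hmon hdeg'))
      (transG hG h2F f₀)
      (fun x y x' y' h h' hx hy hx' hy' => two_transitive hG f₀ x y x' y' h h' hx hy hx' hy')
end

section
/- Let F be a field of characteristic different from 2, let n > m ≥ 2 be integers, and let f₀ ∈ F[T] be a monic polynomial of degree n. Let K = F(A₀, …, A_m) be the field of rational functions in m + 1 independent variables A₀, …, A_m over F, set f(T) = f₀(T) + ∑_{i=0}^m Aᵢ Tⁱ ∈ K[T], and let L be a splitting field of f over K. Then for any root α of f in L, writing y = −α, the m + 1 elements A₀, A₂, A₃, …, A_m, y of L are algebraically independent over F. -/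
/-- With `K = F(A₀,…,A_m)`, `f = f₀ + ∑ Aᵢ Tⁱ` (`char F ≠ 2`, `n > m ≥ 2`, `f₀` monic of
degree `n`) and `L` a splitting field of `f` over `K`, for any root `α` of `f` in `L` and
`y = -α`, the `m + 1` elements `A₀, A₂, A₃, …, A_m, y` of `L` are algebraically
independent over `F`. -/
theorem generic_root_algebraically_independent
    (F : Type) [Field F] (hchar : ringChar F ≠ 2)
    (n m : ℕ) (hm : 2 ≤ m) (hmn : m < n)
    (f₀ : Polynomial F) (hmon : f₀.Monic) (hdeg : f₀.natDegree = n)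
    (K : Type) [Field K] [Algebra (MvPolynomial (Fin (m + 1)) F) K]
    [IsFractionRing (MvPolynomial (Fin (m + 1)) F) K]
    [Algebra F K] [IsScalarTower F (MvPolynomial (Fin (m + 1)) F) K]
    (f : Polynomial K)
    (hf : f = (f₀.map ((algebraMap (MvPolynomial (Fin (m + 1)) F) K).comp
            (MvPolynomial.C : F →+* MvPolynomial (Fin (m + 1)) F))) +
          ∑ i : Fin (m + 1),
            Polynomial.C (algebraMap (MvPolynomial (Fin (m + 1)) F) K
              (MvPolynomial.X i)) * Polynomial.X ^ (i : ℕ))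
    (L : Type) [Field L] [Algebra K L] [Algebra F L] [IsScalarTower F K L]
    (hL : Polynomial.IsSplittingField K L f)
    (α : L) (hα : Polynomial.aeval α f = 0) :
    AlgebraicIndependent F
      (fun o : Option {i : Fin (m + 1) // i ≠ 1} =>
        o.elim (-α)
          (fun i => algebraMap K L
            (algebraMap (MvPolynomial (Fin (m + 1)) F) K (MvPolynomial.X i.1)))) := by
  classical
  set x : Fin (m + 1) → L := fun i => algebraMap K L
    (algebraMap (MvPolynomial (Fin (m + 1)) F) K (MvPolynomial.X i)) with hxdef
  -- the variables are algebraically independent in `L`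
  have hx : AlgebraicIndependent F x := by
    have h1 := MvPolynomial.algebraicIndependent_X (Fin (m + 1)) F
    have h2 := h1.map' (f := IsScalarTower.toAlgHom F (MvPolynomial (Fin (m + 1)) F) K)
      (IsFractionRing.injective (MvPolynomial (Fin (m + 1)) F) K)
    exact h2.map' (f := IsScalarTower.toAlgHom F K L) (algebraMap K L).injective
  have hcomp : ((algebraMap (MvPolynomial (Fin (m + 1)) F) K).comp
      (MvPolynomial.C : F →+* MvPolynomial (Fin (m + 1)) F)) = algebraMap F K := by
    rw [← MvPolynomial.algebraMap_eq, ← IsScalarTower.algebraMap_eq]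
  -- the root equation
  have hroot : Polynomial.aeval α f₀ + ∑ i, x i * α ^ (i : ℕ) = 0 := by
    rw [hf, hcomp] at hα
    simpa [hxdef, Polynomial.aeval_map_algebraMap] using hα
  have hα0 : α ≠ 0 := by
    rintro rfl
    have h0 : x 0 = algebraMap F L (-(f₀.coeff 0)) := by
      rw [Fin.sum_univ_succ] at hroot
      simp [← Polynomial.coeff_zero_eq_aeval_zero'] at hroot
      rw [map_neg]
      linear_combination hroot
    have := hx.transcendental 0
    rw [h0] at this
    exact this (isAlgebraic_algebraMap _)
  have hx' : AlgebraicIndependent F (fun i : {i : Fin (m + 1) // i ≠ 1} => x i.1) :=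
    hx.comp _ Subtype.val_injective
  refine (hx'.option_iff_transcendental (-α)).mpr ?_
  have hT : Transcendental (Algebra.adjoin F
      (Set.range (fun i : {i : Fin (m + 1) // i ≠ 1} => x i.1))) (x 1) := by
    have := hx.transcendental_adjoin (s := {1}ᶜ) (i := 1) (by simp)
    rwa [Set.image_eq_range] at this
  intro halg
  apply hT
  set R := Algebra.adjoin F (Set.range (fun i : {i : Fin (m + 1) // i ≠ 1} => x i.1)) with hR
  have hαalg : IsAlgebraic R α := by simpa using halg.neg
  refine IsAlgebraic.of_mul (mem_nonZeroDivisors_of_ne_zero hα0) hαalg ?_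
  have h1 : ((1 : Fin (m + 1)) : ℕ) = 1 := by
    rw [Fin.val_one', Nat.mod_eq_of_lt (by omega)]
  rw [← Finset.add_sum_erase _ _ (Finset.mem_univ (1 : Fin (m + 1))), h1, pow_one] at hroot
  have heq : α * x 1 = -(Polynomial.aeval α f₀ +
      ∑ i ∈ Finset.univ.erase (1 : Fin (m + 1)), x i * α ^ (i : ℕ)) := by
    linear_combination hroot
  rw [heq]
  have hmem : ∀ y : L, IsAlgebraic R y ↔ y ∈ Subalgebra.algebraicClosure R L :=
    fun y => Iff.rfl
  have hαm := (hmem α).1 hαalg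
  refine (hmem _).2 (neg_mem (add_mem ?_ (sum_mem fun i hi => mul_mem ?_ (pow_mem hαm _))))
  · rw [← Polynomial.aeval_map_algebraMap R]
    exact Algebra.adjoin_le (Set.singleton_subset_iff.2 hαm)
      (Polynomial.aeval_mem_adjoin_singleton R α)
  · have hi1 : i ≠ 1 := Finset.ne_of_mem_erase hi
    have : x i ∈ R := Algebra.subset_adjoin ⟨⟨i, hi1⟩, rfl⟩
    exact (Subalgebra.algebraicClosure R L).algebraMap_mem ⟨x i, this⟩
end
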